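/- Let 𝛑 be a policy ensemble, Lipschitz continuous in α up to finitely many discontinuities, with 𝛍 = Ψ(𝛑). Under Assumptions (W) and (Lip), consider the N-agent policy (π¹,…,π^{i−1},π̂,π^{i+1},…,π^N) where (π¹,…,π^N) = Γ_N(𝛑) and π̂ ∈ Π is arbitrary. Then for any ε, p > 0 there exists N' such that for all N > N': |J^N_i(π¹,…,π^{i−1},π̂,π^{i+1},…,π^N) − J^𝛍_{i/N}(π̂)| < ε, uniformly over all π̂ ∈ Π and all i in some set 𝒲_N ⊆ 𝒱_N with |𝒲_N| ≥ ⌊(1−p)N⌋. -/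

import Mathlib

open MeasureTheory Filter
open scoped BigOperators

namespace GMFG

variable {𝒳 𝒰 : Type*}

/-- The probability simplex 𝒫(𝒳) on a finite set, as probability mass functions. -/
def simplex (𝒳 : Type*) [Fintype 𝒳] : Set (𝒳 → ℝ) :=
  {p | (∀ x, 0 ≤ p x) ∧ ∑ x, p x = 1}

/-- The set ℬ₁(𝒳) of (sub-probability) measures with total mass at most 1,
as mass functions. -/
def subProb (𝒳 : Type*) [Fintype 𝒳] : Set (𝒳 → ℝ) :=
  {p | (∀ x, 0 ≤ p x) ∧ ∑ x, p x ≤ 1}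

/-- L¹ distance between measures on a finite set. -/
noncomputable def l1dist [Fintype 𝒳] (ν ν' : 𝒳 → ℝ) : ℝ := ∑ x, |ν x - ν' x|

/-- Markovian feedback policies π ∈ Π = 𝒫(𝒰)^{𝒯×𝒳}. -/
def IsPolicy [Fintype 𝒰] (π : ℕ → 𝒳 → 𝒰 → ℝ) : Prop :=
  ∀ t x, (∀ u, 0 ≤ π t x u) ∧ ∑ u, π t x u = 1

/-- P : 𝒳×𝒰×ℬ₁(𝒳) → 𝒫(𝒳) is a transition kernel. -/
def IsKernel [Fintype 𝒳] [Fintype 𝒰] (P : 𝒳 → 𝒰 → (𝒳 → ℝ) → 𝒳 → ℝ) : Prop :=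
  ∀ x u ν, ν ∈ subProb 𝒳 → P x u ν ∈ simplex 𝒳

/-- Lipschitz continuity of the transition kernel w.r.t. the L¹ norm. -/
def KernelLipschitz [Fintype 𝒳] [Fintype 𝒰] (P : 𝒳 → 𝒰 → (𝒳 → ℝ) → 𝒳 → ℝ) (L : ℝ) : Prop :=
  ∀ x u ν ν', ν ∈ subProb 𝒳 → ν' ∈ subProb 𝒳 → l1dist (P x u ν) (P x u ν') ≤ L * l1dist ν ν'

/-- Lipschitz continuity of the reward w.r.t. the L¹ norm. -/
def RewardLipschitz [Fintype 𝒳] [Fintype 𝒰] (r : 𝒳 → 𝒰 → (𝒳 → ℝ) → ℝ) (L : ℝ) : Prop :=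
  ∀ x u ν ν', ν ∈ subProb 𝒳 → ν' ∈ subProb 𝒳 → |r x u ν - r x u ν'| ≤ L * l1dist ν ν'

/-- A graphon: symmetric, measurable, [0,1]-valued. -/
def IsGraphon (W : ℝ → ℝ → ℝ) : Prop :=
  Measurable (Function.uncurry W) ∧ (∀ a b, W a b = W b a) ∧ ∀ a b, W a b ∈ Set.Icc (0:ℝ) 1

/-- Lipschitz continuity of a graphon on [0,1]². -/
def GraphonLipschitz (W : ℝ → ℝ → ℝ) (L : ℝ) : Prop :=
  ∀ a b a' b' : ℝ, a ∈ Set.Icc (0:ℝ) 1 → b ∈ Set.Icc (0:ℝ) 1 → a' ∈ Set.Icc (0:ℝ) 1 →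
    b' ∈ Set.Icc (0:ℝ) 1 → |W a b - W a' b'| ≤ L * (|a - a'| + |b - b'|)

/-- The neighborhood mean field 𝔾^α = ∫₀¹ W(α,β) ν^β dβ of a state marginal ensemble ν. -/
noncomputable def nbhd [Fintype 𝒳] (W : ℝ → ℝ → ℝ) (ν : ℝ → 𝒳 → ℝ) (α : ℝ) : 𝒳 → ℝ :=
  fun x => ∫ β in Set.Ioc (0:ℝ) 1, W α β * ν β x

/-- 𝛍 = Ψ(𝛑): the (measurable) mean field ensemble generated by the policy ensemble 𝛑,
via μ^α_0 = μ₀ and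
μ^α_{t+1}(x') = Σ_{x,u} μ^α_t(x) π^α_t(u|x) P(x'|x,u,𝔾^α_t). -/
def IsMeanFieldOf [Fintype 𝒳] [Fintype 𝒰] (W : ℝ → ℝ → ℝ) (P : 𝒳 → 𝒰 → (𝒳 → ℝ) → 𝒳 → ℝ)
    (μ0 : 𝒳 → ℝ) (πe : ℝ → ℕ → 𝒳 → 𝒰 → ℝ) (μ : ℕ → ℝ → 𝒳 → ℝ) : Prop :=
  (∀ t x, Measurable fun α => μ t α x) ∧
  (∀ α ∈ Set.Icc (0:ℝ) 1, μ 0 α = μ0) ∧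
  ∀ t : ℕ, ∀ α ∈ Set.Icc (0:ℝ) 1, ∀ x' : 𝒳,
    μ (t+1) α x' = ∑ x, μ t α x * ∑ u, πe α t x u * P x u (nbhd W (μ t) α) x'

/-- The law of the state of a single mean field agent with neighborhood mean field
G and policy π: X_0 ∼ μ₀, U_t ∼ π_t(·|X_t), X_{t+1} ∼ P(·|X_t,U_t,G_t). -/
noncomputable def stateLaw [Fintype 𝒳] [Fintype 𝒰] (P : 𝒳 → 𝒰 → (𝒳 → ℝ) → 𝒳 → ℝ)
    (μ0 : 𝒳 → ℝ) (G : ℕ → 𝒳 → ℝ) (π : ℕ → 𝒳 → 𝒰 → ℝ) : ℕ → 𝒳 → ℝ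
  | 0 => μ0
  | (t+1) => fun x' => ∑ x, stateLaw P μ0 G π t x * ∑ u, π t x u * P x u (G t) x'

/-- Mean field objective J(π) = E[Σ_{t<T} r(X_t,U_t,G_t)] of a single agent whose
neighborhood mean field is G. -/
noncomputable def Jmf [Fintype 𝒳] [Fintype 𝒰] (T : ℕ) (r : 𝒳 → 𝒰 → (𝒳 → ℝ) → ℝ)
    (P : 𝒳 → 𝒰 → (𝒳 → ℝ) → 𝒳 → ℝ) (μ0 : 𝒳 → ℝ) (G : ℕ → 𝒳 → ℝ) (π : ℕ → 𝒳 → 𝒰 → ℝ) : ℝ :=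
  ∑ t ∈ Finset.range T, ∑ x, stateLaw P μ0 G π t x * ∑ u, π t x u * r x u (G t)

/-- A Graphon Mean Field Equilibrium: a measurable policy ensemble 𝛑 and mean field
ensemble 𝛍 with 𝛍 = Ψ(𝛑) and π^α optimal for J^𝛍_α for every α ∈ [0,1]. -/
def IsGMFE [Fintype 𝒳] [Fintype 𝒰] (T : ℕ) (W : ℝ → ℝ → ℝ) (P : 𝒳 → 𝒰 → (𝒳 → ℝ) → 𝒳 → ℝ)
    (r : 𝒳 → 𝒰 → (𝒳 → ℝ) → ℝ) (μ0 : 𝒳 → ℝ)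
    (πe : ℝ → ℕ → 𝒳 → 𝒰 → ℝ) (μ : ℕ → ℝ → 𝒳 → ℝ) : Prop :=
  (∀ t x u, Measurable fun α => πe α t x u) ∧
  (∀ α ∈ Set.Icc (0:ℝ) 1, IsPolicy (πe α)) ∧
  IsMeanFieldOf W P μ0 πe μ ∧
  ∀ α ∈ Set.Icc (0:ℝ) 1, ∀ π' : ℕ → 𝒳 → 𝒰 → ℝ, IsPolicy π' →
    Jmf T r P μ0 (fun t => nbhd W (μ t) α) π' ≤ Jmf T r P μ0 (fun t => nbhd W (μ t) α) (πe α)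

/-- α ↦ π^α is Lipschitz continuous up to a finite set D of discontinuities. -/
def EnsembleLipschitzUpTo [Fintype 𝒳] [Fintype 𝒰] (πe : ℝ → ℕ → 𝒳 → 𝒰 → ℝ) : Prop :=
  ∃ (L : ℝ) (D : Finset ℝ), ∀ (t : ℕ) (x : 𝒳) (u : 𝒰),
    ∀ α ∈ Set.Icc (0:ℝ) 1, ∀ β ∈ Set.Icc (0:ℝ) 1,
      (∀ d ∈ D, d ∉ Set.uIcc α β) → |πe α t x u - πe β t x u| ≤ L * |α - β|

/-- Edge indicators of a simple (undirected) graph. -/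
def IsEdgeWeights {N : ℕ} (ξ : Fin N → Fin N → ℝ) : Prop :=
  (∀ i j, ξ i j = 0 ∨ ξ i j = 1) ∧ ∀ i j, ξ i j = ξ j i

/-- Empirical neighborhood mean field 𝔾ⁱ = (1/N) Σ_j ξ_{ij} δ_{X^j}. -/
noncomputable def empNbhd [Fintype 𝒳] [DecidableEq 𝒳] {N : ℕ} (ξ : Fin N → Fin N → ℝ)
    (X : Fin N → 𝒳) (i : Fin N) : 𝒳 → ℝ :=
  fun x => (N : ℝ)⁻¹ * ∑ j, ξ i j * (if X j = x then 1 else 0)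

/-- The joint law of the N agents' states at time t: X^i_0 ∼ μ₀ i.i.d.,
U^i_t ∼ π^i_t(·|X^i_t), X^i_{t+1} ∼ P(·|X^i_t,U^i_t,𝔾^i_t) conditionally independently. -/
noncomputable def jointLaw [Fintype 𝒳] [DecidableEq 𝒳] [Fintype 𝒰] {N : ℕ}
    (P : 𝒳 → 𝒰 → (𝒳 → ℝ) → 𝒳 → ℝ) (μ0 : 𝒳 → ℝ) (ξ : Fin N → Fin N → ℝ)
    (πs : Fin N → ℕ → 𝒳 → 𝒰 → ℝ) : ℕ → (Fin N → 𝒳) → ℝ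
  | 0 => fun X => ∏ i, μ0 (X i)
  | (t+1) => fun Y => ∑ X : Fin N → 𝒳, jointLaw P μ0 ξ πs t X *
      ∏ i, ∑ u, πs i t (X i) u * P (X i) u (empNbhd ξ X i) (Y i)

/-- The objective J^N_i = E[Σ_{t<T} r(X^i_t,U^i_t,𝔾^i_t)] of agent i in the N-agent game. -/
noncomputable def JN [Fintype 𝒳] [DecidableEq 𝒳] [Fintype 𝒰] {N : ℕ} (T : ℕ)
    (r : 𝒳 → 𝒰 → (𝒳 → ℝ) → ℝ) (P : 𝒳 → 𝒰 → (𝒳 → ℝ) → 𝒳 → ℝ) (μ0 : 𝒳 → ℝ)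
    (ξ : Fin N → Fin N → ℝ) (πs : Fin N → ℕ → 𝒳 → 𝒰 → ℝ) (i : Fin N) : ℝ :=
  ∑ t ∈ Finset.range T, ∑ X : Fin N → 𝒳, jointLaw P μ0 ξ πs t X *
    ∑ u, πs i t (X i) u * r (X i) u (empNbhd ξ X i)

/-- Γ_N(𝛑) = (π^{1/N},…,π^{N/N}) (agent i : Fin N has graphon index (i+1)/N). -/
noncomputable def gammaN (πe : ℝ → ℕ → 𝒳 → 𝒰 → ℝ) (N : ℕ) : Fin N → ℕ → 𝒳 → 𝒰 → ℝ :=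
  fun i => πe ((((i : ℕ) : ℝ) + 1) / N)

/-- The step graphon W_N of a finite graph: W_N(x,y) = ξ_{⌈Nx⌉,⌈Ny⌉}. -/
noncomputable def stepGraphon {N : ℕ} (ξ : Fin N → Fin N → ℝ) : ℝ → ℝ → ℝ := fun a b =>
  ∑ i : Fin N, ∑ j : Fin N,
    (if ((i : ℕ) : ℝ) / N < a ∧ a ≤ (((i : ℕ) : ℝ) + 1) / N then 1 else 0) *
    (if ((j : ℕ) : ℝ) / N < b ∧ b ≤ (((j : ℕ) : ℝ) + 1) / N then 1 else 0) * ξ i j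

/-- Assumption (W): ‖W_N − W‖_{L∞→L1} → 0, i.e.
sup_{‖g‖∞ ≤ 1} ∫₀¹ |∫₀¹ (W_N(α,β) − W(α,β)) g(β) dβ| dα → 0. -/
def OpConvergesTo (WN : (N : ℕ) → ℝ → ℝ → ℝ) (W : ℝ → ℝ → ℝ) : Prop :=
  ∀ ε > (0:ℝ), ∃ N₀ : ℕ, ∀ N ≥ N₀, ∀ g : ℝ → ℝ, Measurable g → (∀ β, |g β| ≤ 1) →
    (∫ α in Set.Ioc (0:ℝ) 1, |∫ β in Set.Ioc (0:ℝ) 1, (WN N α β - W α β) * g β|) ≤ ε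

/-- ‖W_N − W‖_{L∞→L1} = O(1/√N). -/
def OpRateSqrt (WN : (N : ℕ) → ℝ → ℝ → ℝ) (W : ℝ → ℝ → ℝ) : Prop :=
  ∃ C : ℝ, ∀ N : ℕ, 1 ≤ N → ∀ g : ℝ → ℝ, Measurable g → (∀ β, |g β| ≤ 1) →
    (∫ α in Set.Ioc (0:ℝ) 1, |∫ β in Set.Ioc (0:ℝ) 1, (WN N α β - W α β) * g β|) ≤ C / Real.sqrt N

/-- 𝛍^N_t(f) = ∫₀¹ f(X^{⌈Nα⌉}, α) dα, the integral of f against the random empirical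
step measure ensemble. -/
noncomputable def empInt [Fintype 𝒳] {N : ℕ} (f : 𝒳 → ℝ → ℝ) (X : Fin N → 𝒳) : ℝ :=
  ∑ i : Fin N, ∫ α in Set.Ioc (((i : ℕ) : ℝ) / N) ((((i : ℕ) : ℝ) + 1) / N), f (X i) α

/-- 𝛍_t(f) = ∫₀¹ Σ_x f(x,α) μ^α_t(x) dα. -/
noncomputable def mfInt [Fintype 𝒳] (f : 𝒳 → ℝ → ℝ) (ν : ℝ → 𝒳 → ℝ) : ℝ :=
  ∫ α in Set.Ioc (0:ℝ) 1, ∑ x, f x α * ν α x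

/-- The representative α_m = (m+1)/M of the m-th equivalence class Ĩ_m = (m/M,(m+1)/M]. -/
noncomputable def rep (M : ℕ) (m : Fin M) : ℝ := (((m : ℕ) : ℝ) + 1) / M

/-- Discretized neighborhood mean field 𝔾̂^{α_m} = (1/M) Σ_n W(α_m,α_n) ν^{α_n}. -/
noncomputable def approxNbhd [Fintype 𝒳] {M : ℕ} (W : ℝ → ℝ → ℝ) (ν : Fin M → 𝒳 → ℝ)
    (m : Fin M) : 𝒳 → ℝ :=
  fun x => (M : ℝ)⁻¹ * ∑ n, W (rep M m) (rep M n) * ν n x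

/-- The approximate mean field μ̂ = Ψ̂(𝛑) of the M equivalence classes method. -/
noncomputable def approxMF [Fintype 𝒳] [Fintype 𝒰] {M : ℕ} (W : ℝ → ℝ → ℝ)
    (P : 𝒳 → 𝒰 → (𝒳 → ℝ) → 𝒳 → ℝ) (μ0 : 𝒳 → ℝ) (πm : Fin M → ℕ → 𝒳 → 𝒰 → ℝ) :
    ℕ → Fin M → 𝒳 → ℝ
  | 0 => fun _ => μ0
  | (t+1) => fun m x' => ∑ x, approxMF W P μ0 πm t m x *
      ∑ u, πm m t x u * P x u (approxNbhd W (approxMF W P μ0 πm t) m) x'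

/-- A solution (𝛑, 𝛍) of the M equivalence classes method: 𝛑 is determined by policies
π^{α_m} (one per class), each optimal for the generated approximate mean field 𝛍 = Ψ̂(𝛑). -/
def IsEqClassSolution [Fintype 𝒳] [Fintype 𝒰] (T : ℕ) {M : ℕ} (W : ℝ → ℝ → ℝ)
    (P : 𝒳 → 𝒰 → (𝒳 → ℝ) → 𝒳 → ℝ) (r : 𝒳 → 𝒰 → (𝒳 → ℝ) → ℝ) (μ0 : 𝒳 → ℝ)
    (πm : Fin M → ℕ → 𝒳 → 𝒰 → ℝ) : Prop :=
  (∀ m, IsPolicy (πm m)) ∧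
  ∀ m, ∀ π' : ℕ → 𝒳 → 𝒰 → ℝ, IsPolicy π' →
    Jmf T r P μ0 (fun t => approxNbhd W (approxMF W P μ0 πm t) m) π'
      ≤ Jmf T r P μ0 (fun t => approxNbhd W (approxMF W P μ0 πm t) m) (πm m)

/-- The optimal action value function Q with k steps to go from time t,
Q(t,x,u) = r(x,u,G_t) + Σ_{x'} P(x'|x,u,G_t) max_{u'} Q(t+1,x',u'). -/
noncomputable def Qfun [Fintype 𝒳] [Fintype 𝒰] [Nonempty 𝒰] (r : 𝒳 → 𝒰 → (𝒳 → ℝ) → ℝ)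
    (P : 𝒳 → 𝒰 → (𝒳 → ℝ) → 𝒳 → ℝ) (G : ℕ → 𝒳 → ℝ) : ℕ → ℕ → 𝒳 → 𝒰 → ℝ
  | 0 => fun _ _ _ => 0
  | (k+1) => fun t x u => r x u (G t) + ∑ x', P x u (G t) x' *
      Finset.univ.sup' Finset.univ_nonempty (fun u' => Qfun r P G k (t+1) x' u')

/-- The Boltzmann (softmax) policy Φ̂_η(𝛍) of the M equivalence classes method with
horizon T, temperature η and block mean field ν. -/
noncomputable def boltzmann [Fintype 𝒳] [Fintype 𝒰] [Nonempty 𝒰] (T : ℕ) (η : ℝ)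
    (r : 𝒳 → 𝒰 → (𝒳 → ℝ) → ℝ) (P : 𝒳 → 𝒰 → (𝒳 → ℝ) → 𝒳 → ℝ) (W : ℝ → ℝ → ℝ) {M : ℕ}
    (ν : ℕ → Fin M → 𝒳 → ℝ) : Fin M → ℕ → 𝒳 → 𝒰 → ℝ :=
  fun m t x u =>
    Real.exp (Qfun r P (fun s => approxNbhd W (ν s) m) (T - t) t x u / η) /
      ∑ u' : 𝒰, Real.exp (Qfun r P (fun s => approxNbhd W (ν s) m) (T - t) t x u' / η)

/-- One step 𝛍 ↦ Ψ̂(Φ̂_η(𝛍)) of the Boltzmann fixed point iteration. -/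
noncomputable def boltzIter [Fintype 𝒳] [Fintype 𝒰] [Nonempty 𝒰] (T : ℕ) (η : ℝ)
    (r : 𝒳 → 𝒰 → (𝒳 → ℝ) → ℝ) (P : 𝒳 → 𝒰 → (𝒳 → ℝ) → 𝒳 → ℝ) (W : ℝ → ℝ → ℝ) (μ0 : 𝒳 → ℝ)
    {M : ℕ} (ν : ℕ → Fin M → 𝒳 → ℝ) : ℕ → Fin M → 𝒳 → ℝ :=
  fun t => approxMF W P μ0 (boltzmann T η r P W ν) t


/-! ### Finite product laws -/

lemma sum_prod_mul {ι : Type*} [Fintype ι] [DecidableEq ι] [Fintype 𝒳] (q h : ι → 𝒳 → ℝ) :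
    ∑ Y : ι → 𝒳, (∏ i, q i (Y i)) * ∏ i, h i (Y i) = ∏ i, ∑ y, q i y * h i y := by
  classical
  rw [Finset.prod_univ_sum, Fintype.piFinset_univ]
  exact Finset.sum_congr rfl fun Y _ => by rw [Finset.prod_mul_distrib]

lemma sum_prod_one {ι : Type*} [Fintype ι] [DecidableEq ι] [Fintype 𝒳] (q : ι → 𝒳 → ℝ)
    (hq : ∀ i, q i ∈ simplex 𝒳) : ∑ Y : ι → 𝒳, (∏ i, q i (Y i)) = 1 := by
  have := sum_prod_mul q (fun _ _ => 1)
  simp only [Finset.prod_const_one, mul_one] at this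
  rw [this]
  exact Finset.prod_eq_one fun i _ => (hq i).2

lemma sum_prod_marg {ι : Type*} [Fintype ι] [DecidableEq ι] [Fintype 𝒳] (q : ι → 𝒳 → ℝ)
    (hq : ∀ i, q i ∈ simplex 𝒳) (j : ι) (f : 𝒳 → ℝ) :
    ∑ Y : ι → 𝒳, (∏ i, q i (Y i)) * f (Y j) = ∑ y, q j y * f y := by
  have := sum_prod_mul q (fun i y => if i = j then f y else 1)
  simp only [Finset.prod_ite_eq', Finset.mem_univ, if_true] at this
  rw [this, Finset.prod_eq_single j]
  · simp
  · intro i _ hij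
    simp [hij, (hq i).2]
  · simp

lemma sum_prod_cross {ι : Type*} [Fintype ι] [DecidableEq ι] [Fintype 𝒳] (q : ι → 𝒳 → ℝ)
    (j k : ι) (hjk : j ≠ k) (f g : 𝒳 → ℝ) (hf : ∑ y, q j y * f y = 0) :
    ∑ Y : ι → 𝒳, (∏ i, q i (Y i)) * (f (Y j) * g (Y k)) = 0 := by
  have := sum_prod_mul q (fun i y => (if i = j then f y else 1) * (if i = k then g y else 1))
  simp only [Finset.prod_mul_distrib, Finset.prod_ite_eq', Finset.mem_univ, if_true] at this
  rw [this]
  apply Finset.prod_eq_zero (Finset.mem_univ j)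
  simpa [hjk] using hf

lemma simplex_abs_le [Fintype 𝒳] {q : 𝒳 → ℝ} (hq : q ∈ simplex 𝒳) {f : 𝒳 → ℝ} {c : ℝ}
    (hf : ∀ y, |f y| ≤ c) : |∑ y, q y * f y| ≤ c := by
  calc |∑ y, q y * f y| ≤ ∑ y, |q y * f y| := Finset.abs_sum_le_sum_abs _ _
    _ ≤ ∑ y, q y * c := Finset.sum_le_sum fun y _ => by
        rw [abs_mul, abs_of_nonneg (hq.1 y)]
        exact mul_le_mul_of_nonneg_left (hf y) (hq.1 y)
    _ = c := by rw [← Finset.sum_mul, hq.2, one_mul]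

lemma fluct [Fintype 𝒳] {N : ℕ} (hN : 0 < N) (q : Fin N → 𝒳 → ℝ)
    (hq : ∀ i, q i ∈ simplex 𝒳) (f : Fin N → 𝒳 → ℝ) (hf : ∀ i y, |f i y| ≤ 1) :
    ∑ Y : Fin N → 𝒳, (∏ i, q i (Y i)) *
      |(N : ℝ)⁻¹ * ∑ j, (f j (Y j) - ∑ y, q j y * f j y)| ≤ 4 / Real.sqrt N := by
  have hN' : (0:ℝ) < N := by exact_mod_cast hN
  set s := Real.sqrt N with hs
  have hs0 : 0 < s := Real.sqrt_pos.2 hN'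
  have hss : s * s = N := Real.mul_self_sqrt hN'.le
  set g : Fin N → 𝒳 → ℝ := fun j y => f j y - ∑ y, q j y * f j y with hg
  have hg0 : ∀ j, ∑ y, q j y * g j y = 0 := by
    intro j
    simp only [hg, mul_sub, Finset.sum_sub_distrib]
    rw [← Finset.sum_mul, (hq j).2]; ring
  have hg2 : ∀ j y, |g j y| ≤ 2 := by
    intro j y
    have h1 := hf j y
    have h2 := simplex_abs_le (hq j) (hf j)
    have h3 := abs_sub (f j y) (∑ y, q j y * f j y)
    simp only [hg]; linarith
  have hw : ∀ Y : Fin N → 𝒳, 0 ≤ ∏ i, q i (Y i) :=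
    fun Y => Finset.prod_nonneg fun i _ => (hq i).1 _
  have key : ∑ Y : Fin N → 𝒳, (∏ i, q i (Y i)) * (∑ j, g j (Y j))^2 ≤ 4 * N := by
    have e1 : ∀ Y : Fin N → 𝒳, (∏ i, q i (Y i)) * (∑ j, g j (Y j))^2 =
        ∑ j, ∑ k, (∏ i, q i (Y i)) * (g j (Y j) * g k (Y k)) := by
      intro Y
      rw [sq, Finset.sum_mul_sum, Finset.mul_sum]
      exact Finset.sum_congr rfl fun j _ => by rw [Finset.mul_sum]
    simp only [e1]
    rw [Finset.sum_comm]
    calc _ ≤ ∑ j : Fin N, (4:ℝ) := Finset.sum_le_sum fun j _ => ?_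
      _ = 4 * N := by simp; ring
    rw [Finset.sum_comm, Finset.sum_eq_single j]
    · calc _ ≤ ∑ Y : Fin N → 𝒳, (∏ i, q i (Y i)) * 4 := Finset.sum_le_sum fun Y _ => by
            apply mul_le_mul_of_nonneg_left _ (hw Y)
            have := hg2 j (Y j)
            rw [← sq, ← sq_abs]
            nlinarith [abs_nonneg (g j (Y j))]
        _ = 4 := by rw [← Finset.sum_mul, sum_prod_one q hq, one_mul]
    · intro k _ hk
      exact sum_prod_cross q j k (Ne.symm hk) (g j) (g k) (hg0 j)
    · simp
  have pt : ∀ z : ℝ, |(N:ℝ)⁻¹ * z| ≤ s⁻¹ * (N:ℝ)⁻¹ * z^2 / 2 + s⁻¹ / 2 := by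
    intro z
    rw [abs_mul, abs_of_pos (inv_pos.2 hN'), ← sq_abs z, ← hss]
    have : 0 ≤ s⁻¹ * (s⁻¹ * |z| - 1)^2 := by positivity
    have e : (s*s)⁻¹ = s⁻¹ * s⁻¹ := mul_inv _ _
    rw [e]; nlinarith
  calc _ ≤ ∑ Y : Fin N → 𝒳, (∏ i, q i (Y i)) *
        (s⁻¹ * (N:ℝ)⁻¹ * (∑ j, g j (Y j))^2 / 2 + s⁻¹ / 2) :=
        Finset.sum_le_sum fun Y _ => mul_le_mul_of_nonneg_left (pt _) (hw Y)
    _ = s⁻¹ * (N:ℝ)⁻¹ / 2 * (∑ Y : Fin N → 𝒳, (∏ i, q i (Y i)) * (∑ j, g j (Y j))^2)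
        + s⁻¹ / 2 := by
        simp only [mul_add, Finset.sum_add_distrib]
        rw [← Finset.sum_mul, sum_prod_one q hq, Finset.mul_sum]
        congr 1
        · exact Finset.sum_congr rfl fun Y _ => by ring
        · ring
    _ ≤ s⁻¹ * (N:ℝ)⁻¹ / 2 * (4 * N) + s⁻¹ / 2 := by gcongr
    _ = 5/2 * s⁻¹ := by field_simp; ring
    _ ≤ 4 / s := by
        rw [div_eq_mul_inv]
        exact mul_le_mul_of_nonneg_right (by norm_num) (inv_pos.2 hs0).le

/-! ### The finite system -/

/-- one-step transition law of agent `i` given the joint state -/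
noncomputable def qk [Fintype 𝒳] [DecidableEq 𝒳] [Fintype 𝒰] {N : ℕ}
    (P : 𝒳 → 𝒰 → (𝒳 → ℝ) → 𝒳 → ℝ) (ξ : Fin N → Fin N → ℝ)
    (πs : Fin N → ℕ → 𝒳 → 𝒰 → ℝ) (t : ℕ) (X : Fin N → 𝒳) (i : Fin N) : 𝒳 → ℝ :=
  fun y => ∑ u, πs i t (X i) u * P (X i) u (empNbhd ξ X i) y

lemma empNbhd_mem [Fintype 𝒳] [DecidableEq 𝒳] {N : ℕ} (hN : 0 < N) {ξ : Fin N → Fin N → ℝ}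
    (hξ : IsEdgeWeights ξ) (X : Fin N → 𝒳) (i : Fin N) : empNbhd ξ X i ∈ subProb 𝒳 := by
  have hN' : (0:ℝ) < N := by exact_mod_cast hN
  have h01 : ∀ j, 0 ≤ ξ i j ∧ ξ i j ≤ 1 := fun j => by
    rcases hξ.1 i j with h | h <;> rw [h] <;> norm_num
  constructor
  · intro x
    unfold empNbhd
    refine mul_nonneg (inv_nonneg.2 hN'.le) (Finset.sum_nonneg fun j _ => mul_nonneg (h01 j).1 ?_)
    split_ifs <;> norm_num
  · unfold empNbhd
    rw [← Finset.mul_sum, Finset.sum_comm]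
    have : ∀ j, ∑ x, ξ i j * (if X j = x then (1:ℝ) else 0) = ξ i j := fun j => by
      simp
    simp only [this]
    rw [inv_mul_le_iff₀ hN', mul_one]
    calc ∑ j, ξ i j ≤ ∑ j : Fin N, (1:ℝ) := Finset.sum_le_sum fun j _ => (h01 j).2
      _ = N := by simp

lemma mix_mem [Fintype 𝒳] [Fintype 𝒰] {p : 𝒰 → ℝ} (hp : (∀ u, 0 ≤ p u) ∧ ∑ u, p u = 1)
    {Q : 𝒰 → 𝒳 → ℝ} (hQ : ∀ u, Q u ∈ simplex 𝒳) : (fun y => ∑ u, p u * Q u y) ∈ simplex 𝒳 := by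
  constructor
  · intro y
    exact Finset.sum_nonneg fun u _ => mul_nonneg (hp.1 u) ((hQ u).1 y)
  · rw [Finset.sum_comm]
    simp only [← Finset.mul_sum, (hQ _).2, mul_one, hp.2]

lemma mix_lip [Fintype 𝒳] [Fintype 𝒰] {p : 𝒰 → ℝ} (hp : (∀ u, 0 ≤ p u) ∧ ∑ u, p u = 1)
    {Q Q' : 𝒰 → 𝒳 → ℝ} {c : ℝ} (hQ : ∀ u, l1dist (Q u) (Q' u) ≤ c) {f : 𝒳 → ℝ}
    (hf : ∀ y, |f y| ≤ 1) :
    |∑ y, (∑ u, p u * Q u y) * f y - ∑ y, (∑ u, p u * Q' u y) * f y| ≤ c := by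
  have e : ∑ y, (∑ u, p u * Q u y) * f y - ∑ y, (∑ u, p u * Q' u y) * f y
      = ∑ u, p u * ∑ y, (Q u y - Q' u y) * f y := by
    rw [← Finset.sum_sub_distrib]
    simp only [Finset.mul_sum]
    rw [Finset.sum_comm]
    refine Finset.sum_congr rfl fun y _ => ?_
    rw [Finset.sum_mul, Finset.sum_mul, ← Finset.sum_sub_distrib]
    exact Finset.sum_congr rfl fun u _ => by ring
  rw [e]
  apply simplex_abs_le (𝒳 := 𝒰) hp
  intro u
  refine le_trans ?_ (hQ u)
  refine (Finset.abs_sum_le_sum_abs _ _).trans (Finset.sum_le_sum fun y _ => ?_)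
  rw [abs_mul]
  exact mul_le_of_le_one_right (abs_nonneg _) (hf y)

lemma qk_mem [Fintype 𝒳] [DecidableEq 𝒳] [Fintype 𝒰] {N : ℕ} (hN : 0 < N)
    {P : 𝒳 → 𝒰 → (𝒳 → ℝ) → 𝒳 → ℝ} (hP : IsKernel P) {ξ : Fin N → Fin N → ℝ}
    (hξ : IsEdgeWeights ξ) {πs : Fin N → ℕ → 𝒳 → 𝒰 → ℝ} (hπ : ∀ i, IsPolicy (πs i)) (t : ℕ)
    (X : Fin N → 𝒳) (i : Fin N) : qk P ξ πs t X i ∈ simplex 𝒳 :=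
  mix_mem (hπ i t (X i)) fun _ => hP _ _ _ (empNbhd_mem hN hξ X i)

lemma joint_step [Fintype 𝒳] [DecidableEq 𝒳] [Fintype 𝒰] {N : ℕ}
    (P : 𝒳 → 𝒰 → (𝒳 → ℝ) → 𝒳 → ℝ) (μ0 : 𝒳 → ℝ) (ξ : Fin N → Fin N → ℝ)
    (πs : Fin N → ℕ → 𝒳 → 𝒰 → ℝ) (t : ℕ) (F : (Fin N → 𝒳) → ℝ) :
    ∑ Y, jointLaw P μ0 ξ πs (t+1) Y * F Y =
      ∑ X, jointLaw P μ0 ξ πs t X * ∑ Y : Fin N → 𝒳, (∏ i, qk P ξ πs t X i (Y i)) * F Y := by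
  simp only [jointLaw, Finset.sum_mul, Finset.mul_sum]
  rw [Finset.sum_comm]
  refine Finset.sum_congr rfl fun X _ => Finset.sum_congr rfl fun Y _ => ?_
  simp only [qk]; ring

lemma joint_mem [Fintype 𝒳] [DecidableEq 𝒳] [Fintype 𝒰] {N : ℕ} (hN : 0 < N)
    {P : 𝒳 → 𝒰 → (𝒳 → ℝ) → 𝒳 → ℝ} (hP : IsKernel P) {μ0 : 𝒳 → ℝ} (hμ0 : μ0 ∈ simplex 𝒳)
    {ξ : Fin N → Fin N → ℝ}
    (hξ : IsEdgeWeights ξ) {πs : Fin N → ℕ → 𝒳 → 𝒰 → ℝ} (hπ : ∀ i, IsPolicy (πs i)) (t : ℕ) :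
    jointLaw P μ0 ξ πs t ∈ simplex (Fin N → 𝒳) := by
  induction t with
  | zero =>
    exact ⟨fun X => Finset.prod_nonneg fun i _ => hμ0.1 _, sum_prod_one (fun _ => μ0) fun _ => hμ0⟩
  | succ t ih =>
    constructor
    · intro Y
      exact Finset.sum_nonneg fun X _ => mul_nonneg (ih.1 X)
        (Finset.prod_nonneg fun i _ => (qk_mem hN hP hξ hπ t X i).1 _)
    · have := joint_step P μ0 ξ πs t (fun _ => 1)
      simp only [mul_one] at this
      rw [this]
      simp only [sum_prod_one _ (qk_mem hN hP hξ hπ t _), mul_one, ih.2]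

/-- local deterministic discrepancy -/
noncomputable def Bd [Fintype 𝒳] {N : ℕ} (ξ : Fin N → Fin N → ℝ)
    (ms Gs : Fin N → 𝒳 → ℝ) (j : Fin N) : ℝ :=
  ∑ x, |(N:ℝ)⁻¹ * ∑ k, ξ j k * ms k x - Gs j x|

lemma nbhd_bound [Fintype 𝒳] [DecidableEq 𝒳] {N : ℕ} {ξ : Fin N → Fin N → ℝ}
    (hξ : IsEdgeWeights ξ) (ms Gs : Fin N → 𝒳 → ℝ) {w : (Fin N → 𝒳) → ℝ}
    (hw : w ∈ simplex (Fin N → 𝒳)) {e : ℝ}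
    (h : ∀ f : Fin N → 𝒳 → ℝ, (∀ i y, |f i y| ≤ 1) →
      ∑ X, w X * |(N:ℝ)⁻¹ * ∑ j, (f j (X j) - ∑ x, ms j x * f j x)| ≤ e) (j : Fin N) :
    ∑ X, w X * l1dist (empNbhd ξ X j) (Gs j) ≤ Fintype.card 𝒳 * e + Bd ξ ms Gs j := by
  have h1 : ∀ x, ∑ X, w X * |empNbhd ξ X j x - Gs j x| ≤
      e + |(N:ℝ)⁻¹ * ∑ k, ξ j k * ms k x - Gs j x| := by
    intro x
    have hx := h (fun k y => ξ j k * (if y = x then 1 else 0)) (by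
      intro k y
      rcases hξ.1 j k with h | h <;> rw [h] <;> split_ifs <;> norm_num)
    have e1 : ∀ k, ∑ y, ms k y * (ξ j k * (if y = x then 1 else 0)) = ξ j k * ms k x := by
      intro k; simp [mul_comm]
    simp only [e1, Finset.sum_sub_distrib, mul_sub] at hx
    calc _ ≤ ∑ X, w X * (|(N:ℝ)⁻¹ * ∑ k, ξ j k * (if X k = x then 1 else 0)
            - (N:ℝ)⁻¹ * ∑ k, ξ j k * ms k x|
            + |(N:ℝ)⁻¹ * ∑ k, ξ j k * ms k x - Gs j x|) :=
          Finset.sum_le_sum fun X _ => mul_le_mul_of_nonneg_left (abs_sub_le _ _ _) (hw.1 X)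
      _ = _ + |(N:ℝ)⁻¹ * ∑ k, ξ j k * ms k x - Gs j x| := by
          simp only [mul_add, Finset.sum_add_distrib]
          rw [← Finset.sum_mul, hw.2, one_mul]
      _ ≤ _ := by gcongr
  calc _ = ∑ x, ∑ X, w X * |empNbhd ξ X j x - Gs j x| := by
        simp only [l1dist, Finset.mul_sum]
        rw [Finset.sum_comm]
    _ ≤ ∑ x, (e + |(N:ℝ)⁻¹ * ∑ k, ξ j k * ms k x - Gs j x|) := Finset.sum_le_sum fun x _ => h1 x
    _ = _ := by simp [Finset.sum_add_distrib, Bd]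

/-- error sequence -/
noncomputable def eta (L C : ℝ) (b : ℕ → ℝ) (N : ℕ) : ℕ → ℝ
  | 0 => 4 / Real.sqrt N
  | (t+1) => 4 / Real.sqrt N + (L * (C * eta L C b N t + b t) + 2 / N) + eta L C b N t

lemma conc [Fintype 𝒳] [DecidableEq 𝒳] [Fintype 𝒰] {N : ℕ} (hN : 0 < N)
    {P : 𝒳 → 𝒰 → (𝒳 → ℝ) → 𝒳 → ℝ} (hP : IsKernel P) {L : ℝ} (hL : 0 ≤ L)
    (hPL : KernelLipschitz P L) {μ0 : 𝒳 → ℝ} (hμ0 : μ0 ∈ simplex 𝒳)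
    {ξ : Fin N → Fin N → ℝ} (hξ : IsEdgeWeights ξ)
    {πs : Fin N → ℕ → 𝒳 → 𝒰 → ℝ} (hπ : ∀ i, IsPolicy (πs i))
    (i : Fin N) {πd : ℕ → 𝒳 → 𝒰 → ℝ} (hπd : IsPolicy πd)
    (ms Gs : ℕ → Fin N → 𝒳 → ℝ) (hG : ∀ t j, Gs t j ∈ subProb 𝒳)
    (hm0 : ∀ j, ms 0 j = μ0)
    (hms : ∀ t j y, ms (t+1) j y = ∑ x, ms t j x * ∑ u, πs j t x u * P x u (Gs t j) y) (t : ℕ) :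
    ∀ f : Fin N → 𝒳 → ℝ, (∀ i y, |f i y| ≤ 1) →
      ∑ X, jointLaw P μ0 ξ (Function.update πs i πd) t X *
        |(N:ℝ)⁻¹ * ∑ j, (f j (X j) - ∑ x, ms t j x * f j x)| ≤
      eta L (Fintype.card 𝒳) (fun s => (N:ℝ)⁻¹ * ∑ j, Bd ξ (ms s) (Gs s) j) N t := by
  have hN' : (0:ℝ) < N := by exact_mod_cast hN
  set πu := Function.update πs i πd with hπu
  have hπu' : ∀ j, IsPolicy (πu j) := by
    intro j
    by_cases h : j = i
    · subst h; simpa [hπu] using hπd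
    · simpa [hπu, h] using hπ j
  induction t with
  | zero =>
    intro f hf
    simp only [hm0, jointLaw, eta]
    exact fluct hN (fun _ => μ0) (fun _ => hμ0) f hf
  | succ t ih =>
    intro f hf
    have hw := joint_mem hN hP hμ0 hξ hπu' t
    set w := jointLaw P μ0 ξ πu t with hwdef
    set H : Fin N → 𝒳 → ℝ := fun j x => ∑ y, (∑ u, πs j t x u * P x u (Gs t j) y) * f j y with hH
    have hH1 : ∀ j x, |H j x| ≤ 1 := fun j x =>
      simplex_abs_le (mix_mem (hπ j t x) fun u => hP x u _ (hG t j)) (hf j)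
    have hmH : ∀ j, ∑ x, ms (t+1) j x * f j x = ∑ x, ms t j x * H j x := by
      intro j
      simp only [hms, hH, Finset.sum_mul, Finset.mul_sum]
      rw [Finset.sum_comm]
      refine Finset.sum_congr rfl fun x _ => Finset.sum_congr rfl fun y _ =>
        Finset.sum_congr rfl fun u _ => by ring
    have hdiff : ∀ X j, |∑ y, qk P ξ πu t X j y * f j y - H j (X j)| ≤
        L * l1dist (empNbhd ξ X j) (Gs t j) + (if j = i then 2 else 0) := by
      intro X j
      have hl : 0 ≤ L * l1dist (empNbhd ξ X j) (Gs t j) :=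
        mul_nonneg hL (Finset.sum_nonneg fun _ _ => abs_nonneg _)
      by_cases h : j = i
      · rw [if_pos h]
        have h1 := simplex_abs_le (qk_mem hN hP hξ hπu' t X j) (hf j)
        have h2 := hH1 j (X j)
        have h3 := abs_sub (∑ y, qk P ξ πu t X j y * f j y) (H j (X j))
        linarith
      · rw [if_neg h, add_zero]
        have : πu j = πs j := by simp [hπu, h]
        simp only [qk, hH, this]
        exact mix_lip (hπ j t (X j)) (fun u => hPL _ _ _ _ (empNbhd_mem hN hξ X j) (hG t j)) (hf j)
    have hNb := nbhd_bound hξ (ms t) (Gs t) hw ih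
    rw [joint_step]
    set E := eta L (Fintype.card 𝒳) (fun s => (N:ℝ)⁻¹ * ∑ j, Bd ξ (ms s) (Gs s) j) N t with hE
    have hin : ∀ X, ∑ Y : Fin N → 𝒳, (∏ i, qk P ξ πu t X i (Y i)) *
        |(N:ℝ)⁻¹ * ∑ j, (f j (Y j) - ∑ x, ms (t+1) j x * f j x)| ≤
        4 / Real.sqrt N + ((N:ℝ)⁻¹ * ∑ j, (L * l1dist (empNbhd ξ X j) (Gs t j)) + 2 / N) +
          |(N:ℝ)⁻¹ * ∑ j, (H j (X j) - ∑ x, ms t j x * H j x)| := by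
      intro X
      have hq := qk_mem hN hP hξ hπu' t X
      have hq0 : ∀ Y : Fin N → 𝒳, 0 ≤ ∏ i, qk P ξ πu t X i (Y i) :=
        fun Y => Finset.prod_nonneg fun i _ => (hq i).1 _
      have hF := fluct hN _ hq f hf
      have hsplit : ∀ Y : Fin N → 𝒳,
          |(N:ℝ)⁻¹ * ∑ j, (f j (Y j) - ∑ x, ms (t+1) j x * f j x)| ≤
          |(N:ℝ)⁻¹ * ∑ j, (f j (Y j) - ∑ y, qk P ξ πu t X j y * f j y)| +
          (((N:ℝ)⁻¹ * ∑ j, (L * l1dist (empNbhd ξ X j) (Gs t j)) + 2 / N) +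
          |(N:ℝ)⁻¹ * ∑ j, (H j (X j) - ∑ x, ms t j x * H j x)|) := by
        intro Y
        have e : (N:ℝ)⁻¹ * ∑ j, (f j (Y j) - ∑ x, ms (t+1) j x * f j x) =
          (N:ℝ)⁻¹ * ∑ j, (f j (Y j) - ∑ y, qk P ξ πu t X j y * f j y) +
          ((N:ℝ)⁻¹ * ∑ j, (∑ y, qk P ξ πu t X j y * f j y - H j (X j)) +
          (N:ℝ)⁻¹ * ∑ j, (H j (X j) - ∑ x, ms t j x * H j x)) := by
          rw [← mul_add, ← mul_add, ← Finset.sum_add_distrib, ← Finset.sum_add_distrib]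
          congr 1
          refine Finset.sum_congr rfl fun j _ => ?_
          rw [hmH]; ring
        rw [e]
        refine (abs_add_le _ _).trans (add_le_add le_rfl ((abs_add_le _ _).trans
          (add_le_add ?_ le_rfl)))
        rw [abs_mul, abs_of_pos (inv_pos.2 hN')]
        calc _ ≤ (N:ℝ)⁻¹ * ∑ j, (L * l1dist (empNbhd ξ X j) (Gs t j) + (if j = i then 2 else 0)) :=
              mul_le_mul_of_nonneg_left ((Finset.abs_sum_le_sum_abs _ _).trans
                (Finset.sum_le_sum fun j _ => hdiff X j)) (inv_pos.2 hN').le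
          _ = _ := by
              rw [Finset.sum_add_distrib, mul_add]
              simp only [Finset.sum_ite_eq', Finset.mem_univ, if_true]
              ring
      refine (Finset.sum_le_sum fun Y _ =>
        mul_le_mul_of_nonneg_left (hsplit Y) (hq0 Y)).trans ?_
      simp only [mul_add (∏ i, qk P ξ πu t X i _), Finset.sum_add_distrib]
      simp only [← Finset.sum_mul, sum_prod_one _ hq, one_mul]
      linarith
    calc _ ≤ _ := Finset.sum_le_sum fun X _ => mul_le_mul_of_nonneg_left (hin X) (hw.1 X)
      _ = 4 / Real.sqrt N + ((N:ℝ)⁻¹ * ∑ j, (L * ∑ X, w X * l1dist (empNbhd ξ X j) (Gs t j)) + 2 / N)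
          + ∑ X, w X * |(N:ℝ)⁻¹ * ∑ j, (H j (X j) - ∑ x, ms t j x * H j x)| := by
            simp only [mul_add (w _), Finset.sum_add_distrib]
            simp only [← Finset.sum_mul, hw.2, one_mul]
            congr 3
            simp only [Finset.mul_sum]
            rw [Finset.sum_comm]
            refine Finset.sum_congr rfl fun j _ => Finset.sum_congr rfl fun X _ => by ring
      _ ≤ 4 / Real.sqrt N + ((N:ℝ)⁻¹ * ∑ j, (L * (Fintype.card 𝒳 * E + Bd ξ (ms t) (Gs t) j)) + 2 / N)
          + E := by
            gcongr with j _
            · exact hNb j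
            · exact ih H hH1
      _ = _ := by
            simp only [eta, ← hE]
            congr 2
            congr 1
            rw [← Finset.mul_sum, Finset.sum_add_distrib]
            simp only [Finset.sum_const, Finset.card_univ, Fintype.card_fin, nsmul_eq_mul]
            field_simp

lemma agent_bound [Fintype 𝒳] [DecidableEq 𝒳] [Fintype 𝒰] {N : ℕ} (hN : 0 < N)
    {P : 𝒳 → 𝒰 → (𝒳 → ℝ) → 𝒳 → ℝ} (hP : IsKernel P) {L : ℝ}
    (hPL : KernelLipschitz P L) {μ0 : 𝒳 → ℝ} (hμ0 : μ0 ∈ simplex 𝒳)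
    {ξ : Fin N → Fin N → ℝ} (hξ : IsEdgeWeights ξ)
    {πs : Fin N → ℕ → 𝒳 → 𝒰 → ℝ} (hπ : ∀ i, IsPolicy (πs i)) (i : Fin N)
    (G : ℕ → 𝒳 → ℝ) (hG : ∀ t, G t ∈ subProb 𝒳) (t : ℕ) :
    ∀ f : 𝒳 → ℝ, (∀ y, |f y| ≤ 1) →
      |∑ X, jointLaw P μ0 ξ πs t X * f (X i) - ∑ x, stateLaw P μ0 G (πs i) t x * f x| ≤
      ∑ s ∈ Finset.range t, L * ∑ X, jointLaw P μ0 ξ πs s X * l1dist (empNbhd ξ X i) (G s) := by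
  induction t with
  | zero =>
    intro f hf
    have := sum_prod_marg (fun _ : Fin N => μ0) (fun _ => hμ0) i f
    simp only [jointLaw, stateLaw, this]
    simp
  | succ t ih =>
    intro f hf
    have hw := joint_mem hN hP hμ0 hξ hπ t
    set w := jointLaw P μ0 ξ πs t with hwdef
    set H : 𝒳 → ℝ := fun x => ∑ y, (∑ u, πs i t x u * P x u (G t) y) * f y with hH
    have hH1 : ∀ x, |H x| ≤ 1 := fun x =>
      simplex_abs_le (mix_mem (hπ i t x) fun u => hP x u _ (hG t)) hf
    have hmH : ∑ x, stateLaw P μ0 G (πs i) (t+1) x * f x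
        = ∑ x, stateLaw P μ0 G (πs i) t x * H x := by
      simp only [stateLaw, hH, Finset.sum_mul, Finset.mul_sum]
      rw [Finset.sum_comm]
      refine Finset.sum_congr rfl fun x _ => Finset.sum_congr rfl fun y _ =>
        Finset.sum_congr rfl fun u _ => by ring
    have hdiff : ∀ X, |∑ y, qk P ξ πs t X i y * f y - H (X i)| ≤
        L * l1dist (empNbhd ξ X i) (G t) := fun X =>
      mix_lip (hπ i t (X i)) (fun u => hPL _ _ _ _ (empNbhd_mem hN hξ X i) (hG t)) hf
    rw [joint_step, hmH, Finset.sum_range_succ]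
    simp only [sum_prod_marg _ (qk_mem hN hP hξ hπ t _) i f]
    have h1 := ih H hH1
    have h2 : |∑ X, w X * ∑ y, qk P ξ πs t X i y * f y - ∑ X, w X * H (X i)| ≤
        L * ∑ X, w X * l1dist (empNbhd ξ X i) (G t) := by
      rw [← Finset.sum_sub_distrib, Finset.mul_sum]
      refine (Finset.abs_sum_le_sum_abs _ _).trans (Finset.sum_le_sum fun X _ => ?_)
      rw [← mul_sub, abs_mul, abs_of_nonneg (hw.1 X)]
      calc _ ≤ _ := mul_le_mul_of_nonneg_left (hdiff X) (hw.1 X)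
        _ = _ := by ring
    have h3 := abs_sub_le (∑ X, w X * ∑ y, qk P ξ πs t X i y * f y) (∑ X, w X * H (X i))
      (∑ x, stateLaw P μ0 G (πs i) t x * H x)
    linarith

lemma obj_bound [Fintype 𝒳] [DecidableEq 𝒳] [Fintype 𝒰] {N : ℕ} (hN : 0 < N) (T : ℕ)
    {P : 𝒳 → 𝒰 → (𝒳 → ℝ) → 𝒳 → ℝ} (hP : IsKernel P) {L : ℝ} (hL : 0 ≤ L)
    (hPL : KernelLipschitz P L) {μ0 : 𝒳 → ℝ} (hμ0 : μ0 ∈ simplex 𝒳)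
    {r : 𝒳 → 𝒰 → (𝒳 → ℝ) → ℝ} {Lr : ℝ} (hLr : 0 ≤ Lr) (hrL : RewardLipschitz r Lr)
    {R : ℝ} (hR0 : 0 < R) (hR : ∀ x u ν, ν ∈ subProb 𝒳 → |r x u ν| ≤ R)
    {ξ : Fin N → Fin N → ℝ} (hξ : IsEdgeWeights ξ)
    {πs : Fin N → ℕ → 𝒳 → 𝒰 → ℝ} (hπ : ∀ i, IsPolicy (πs i)) (i : Fin N)
    (G : ℕ → 𝒳 → ℝ) (hG : ∀ t, G t ∈ subProb 𝒳) (e : ℕ → ℝ)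
    (he : ∀ t, ∑ X, jointLaw P μ0 ξ πs t X * l1dist (empNbhd ξ X i) (G t) ≤ e t) :
    |JN T r P μ0 ξ πs i - Jmf T r P μ0 G (πs i)| ≤
      (Lr + T * (R * L)) * ∑ s ∈ Finset.range T, e s := by
  have he0 : ∀ t, 0 ≤ e t := fun t => le_trans (Finset.sum_nonneg fun X _ =>
    mul_nonneg ((joint_mem hN hP hμ0 hξ hπ t).1 X) (Finset.sum_nonneg fun _ _ => abs_nonneg _)) (he t)
  have hS : ∀ t ∈ Finset.range T,
      |∑ X, jointLaw P μ0 ξ πs t X * ∑ u, πs i t (X i) u * r (X i) u (empNbhd ξ X i) -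
        ∑ x, stateLaw P μ0 G (πs i) t x * ∑ u, πs i t x u * r x u (G t)| ≤
      Lr * e t + R * L * ∑ s ∈ Finset.range T, e s := by
    intro t ht
    have hw := joint_mem hN hP hμ0 hξ hπ t
    set ρ : 𝒳 → ℝ := fun x => ∑ u, πs i t x u * r x u (G t) with hρ
    have hρR : ∀ x, |ρ x / R| ≤ 1 := by
      intro x
      rw [abs_div, abs_of_pos hR0, div_le_one hR0]
      exact simplex_abs_le (𝒳 := 𝒰) (hπ i t x) fun u => hR x u _ (hG t)
    have h1 := agent_bound hN hP hPL hμ0 hξ hπ i G hG t _ hρR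
    have h1' : |∑ X, jointLaw P μ0 ξ πs t X * ρ (X i) - ∑ x, stateLaw P μ0 G (πs i) t x * ρ x| ≤
        R * L * ∑ s ∈ Finset.range T, e s := by
      have e1 : ∑ X, jointLaw P μ0 ξ πs t X * ρ (X i) - ∑ x, stateLaw P μ0 G (πs i) t x * ρ x =
        R * (∑ X, jointLaw P μ0 ξ πs t X * (ρ (X i) / R)
          - ∑ x, stateLaw P μ0 G (πs i) t x * (ρ x / R)) := by
        simp only [← mul_div_assoc, ← Finset.sum_div]
        field_simp
      rw [e1, abs_mul, abs_of_pos hR0, mul_assoc]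
      apply mul_le_mul_of_nonneg_left _ hR0.le
      refine h1.trans ?_
      rw [← Finset.mul_sum]
      apply mul_le_mul_of_nonneg_left _ hL
      calc _ ≤ ∑ s ∈ Finset.range t, e s := Finset.sum_le_sum fun s _ => he s
        _ ≤ _ := Finset.sum_le_sum_of_subset_of_nonneg
            (Finset.range_mono (Finset.mem_range.1 ht).le) fun s _ _ => he0 s
    have h2 : |∑ X, jointLaw P μ0 ξ πs t X * ∑ u, πs i t (X i) u * r (X i) u (empNbhd ξ X i)
        - ∑ X, jointLaw P μ0 ξ πs t X * ρ (X i)| ≤ Lr * e t := by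
      refine le_trans ?_ (mul_le_mul_of_nonneg_left (he t) hLr)
      rw [← Finset.sum_sub_distrib, Finset.mul_sum]
      refine (Finset.abs_sum_le_sum_abs _ _).trans (Finset.sum_le_sum fun X _ => ?_)
      rw [← mul_sub, abs_mul, abs_of_nonneg (hw.1 X)]
      have : |∑ u, πs i t (X i) u * r (X i) u (empNbhd ξ X i) - ρ (X i)| ≤
          Lr * l1dist (empNbhd ξ X i) (G t) := by
        simp only [hρ]
        rw [← Finset.sum_sub_distrib]
        simp only [← mul_sub]
        exact simplex_abs_le (𝒳 := 𝒰) (hπ i t (X i)) fun u =>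
          hrL _ _ _ _ (empNbhd_mem hN hξ X i) (hG t)
      calc _ ≤ _ := mul_le_mul_of_nonneg_left this (hw.1 X)
        _ = _ := by ring
    have h3 := abs_sub_le (∑ X, jointLaw P μ0 ξ πs t X *
      ∑ u, πs i t (X i) u * r (X i) u (empNbhd ξ X i)) (∑ X, jointLaw P μ0 ξ πs t X * ρ (X i))
      (∑ x, stateLaw P μ0 G (πs i) t x * ρ x)
    linarith
  unfold JN Jmf
  rw [← Finset.sum_sub_distrib]
  refine (Finset.abs_sum_le_sum_abs _ _).trans ((Finset.sum_le_sum hS).trans (le_of_eq ?_))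
  rw [Finset.sum_add_distrib, ← Finset.mul_sum]
  simp only [Finset.sum_const, Finset.card_range, nsmul_eq_mul]
  ring

/-! ### Regularity of the mean field -/

lemma intOn_of_bdd {f : ℝ → ℝ} (hf : Measurable f) {c : ℝ}
    (h : ∀ β ∈ Set.Ioc (0:ℝ) 1, |f β| ≤ c) : IntegrableOn f (Set.Ioc (0:ℝ) 1) := by
  refine Measure.integrableOn_of_bounded (M := c) (by simp) hf.aestronglyMeasurable ?_
  exact (ae_restrict_iff' measurableSet_Ioc).2 (Eventually.of_forall fun β hβ => h β hβ)

lemma W_meas {W : ℝ → ℝ → ℝ} (hW : IsGraphon W) (a : ℝ) : Measurable (W a) :=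
  hW.1.comp (measurable_const.prodMk measurable_id)

lemma W_abs {W : ℝ → ℝ → ℝ} (hW : IsGraphon W) (a b : ℝ) : |W a b| ≤ 1 := by
  rw [abs_of_nonneg (hW.2.2 a b).1]; exact (hW.2.2 a b).2

lemma Wg_int {W : ℝ → ℝ → ℝ} (hW : IsGraphon W) (a : ℝ) {g : ℝ → ℝ} (hg : Measurable g)
    (h : ∀ β ∈ Set.Ioc (0:ℝ) 1, |g β| ≤ 1) :
    IntegrableOn (fun β => W a β * g β) (Set.Ioc (0:ℝ) 1) := by
  refine intOn_of_bdd ((W_meas hW a).mul hg) (c := 1) fun β hβ => ?_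
  rw [abs_mul]
  exact mul_le_one₀ (W_abs hW a β) (abs_nonneg _) (h β hβ)

lemma simplex_le_one [Fintype 𝒳] {q : 𝒳 → ℝ} (hq : q ∈ simplex 𝒳) (x : 𝒳) : q x ≤ 1 := by
  rw [← hq.2]
  exact Finset.single_le_sum (fun y _ => hq.1 y) (Finset.mem_univ x)

lemma simplex_abs_one [Fintype 𝒳] {q : 𝒳 → ℝ} (hq : q ∈ simplex 𝒳) (x : 𝒳) : |q x| ≤ 1 := by
  rw [abs_of_nonneg (hq.1 x)]; exact simplex_le_one hq x

lemma Ioc_Icc {β : ℝ} (h : β ∈ Set.Ioc (0:ℝ) 1) : β ∈ Set.Icc (0:ℝ) 1 := ⟨h.1.le, h.2⟩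

lemma nbhd_mem [Fintype 𝒳] {W : ℝ → ℝ → ℝ} (hW : IsGraphon W) {ν : ℝ → 𝒳 → ℝ}
    (hm : ∀ x, Measurable fun α => ν α x) (hν : ∀ α ∈ Set.Icc (0:ℝ) 1, ν α ∈ simplex 𝒳) (a : ℝ) :
    nbhd W ν a ∈ subProb 𝒳 := by
  constructor
  · intro x
    exact setIntegral_nonneg measurableSet_Ioc fun β hβ =>
      mul_nonneg (hW.2.2 a β).1 ((hν β (Ioc_Icc hβ)).1 x)
  · unfold nbhd
    rw [← integral_finsetSum _ fun x _ => Wg_int hW a (hm x) fun β hβ =>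
      simplex_abs_one (hν β (Ioc_Icc hβ)) x]
    calc _ ≤ ∫ β in Set.Ioc (0:ℝ) 1, (1:ℝ) := by
          refine setIntegral_mono_on ?_ (by simp) measurableSet_Ioc fun β hβ => ?_
          · exact integrable_finsetSum _ fun x _ => Wg_int hW a (hm x) fun β hβ =>
              simplex_abs_one (hν β (Ioc_Icc hβ)) x
          · rw [← Finset.mul_sum, (hν β (Ioc_Icc hβ)).2, mul_one]
            exact (hW.2.2 a β).2
      _ = 1 := by simp

lemma mf_simplex [Fintype 𝒳] [Fintype 𝒰] {μ0 : 𝒳 → ℝ} (hμ0 : μ0 ∈ simplex 𝒳)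
    {P : 𝒳 → 𝒰 → (𝒳 → ℝ) → 𝒳 → ℝ} (hP : IsKernel P)
    {W : ℝ → ℝ → ℝ} (hW : IsGraphon W)
    {πe : ℝ → ℕ → 𝒳 → 𝒰 → ℝ} (hπe : ∀ α ∈ Set.Icc (0:ℝ) 1, IsPolicy (πe α))
    {μ : ℕ → ℝ → 𝒳 → ℝ} (hμ : IsMeanFieldOf W P μ0 πe μ) (t : ℕ) :
    ∀ α ∈ Set.Icc (0:ℝ) 1, μ t α ∈ simplex 𝒳 := by
  induction t with
  | zero => intro α hα; rw [hμ.2.1 α hα]; exact hμ0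
  | succ t ih =>
    intro α hα
    have e : μ (t+1) α = fun x' => ∑ x, μ t α x * ∑ u, πe α t x u * P x u (nbhd W (μ t) α) x' :=
      funext fun x' => hμ.2.2 t α hα x'
    rw [e]
    exact mix_mem (𝒰 := 𝒳) (ih α hα) fun x => mix_mem (hπe α hα t x) fun u =>
      hP x u _ (nbhd_mem hW (hμ.1 t) ih α)

lemma nbhd_lip [Fintype 𝒳] {W : ℝ → ℝ → ℝ} (hW : IsGraphon W) {LW : ℝ}
    (hWL : GraphonLipschitz W LW) {ν : ℝ → 𝒳 → ℝ}
    (hm : ∀ x, Measurable fun α => ν α x) (hν : ∀ α ∈ Set.Icc (0:ℝ) 1, ν α ∈ simplex 𝒳)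
    {a a' : ℝ} (ha : a ∈ Set.Icc (0:ℝ) 1) (ha' : a' ∈ Set.Icc (0:ℝ) 1) :
    l1dist (nbhd W ν a) (nbhd W ν a') ≤ Fintype.card 𝒳 * (LW * |a - a'|) := by
  unfold l1dist
  have : ∀ x, |nbhd W ν a x - nbhd W ν a' x| ≤ LW * |a - a'| := by
    intro x
    unfold nbhd
    have hb : ∀ β ∈ Set.Ioc (0:ℝ) 1, |ν β x| ≤ 1 := fun β hβ =>
      simplex_abs_one (hν β (Ioc_Icc hβ)) x
    rw [← integral_sub (Wg_int hW a (hm x) hb) (Wg_int hW a' (hm x) hb)]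
    have := norm_setIntegral_le_of_norm_le_const (μ := volume) (s := Set.Ioc (0:ℝ) 1)
      (f := fun β => W a β * ν β x - W a' β * ν β x) (C := LW * |a - a'|) (by simp) (by
        intro β hβ
        rw [← sub_mul, norm_mul, Real.norm_eq_abs, Real.norm_eq_abs]
        have h1 := hWL a β a' β ha (Ioc_Icc hβ) ha' (Ioc_Icc hβ)
        simp only [sub_self, abs_zero, add_zero] at h1
        exact (mul_le_of_le_one_right (abs_nonneg _) (hb β hβ)).trans h1)
    simpa using this
  calc _ ≤ ∑ x : 𝒳, LW * |a - a'| := Finset.sum_le_sum fun x _ => this x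
    _ = _ := by simp

lemma triple_diff {a b c a' b' c' : ℝ} (hb : |b| ≤ 1) (hc : |c| ≤ 1)
    (ha' : |a'| ≤ 1) (hb' : |b'| ≤ 1) :
    |a * (b * c) - a' * (b' * c')| ≤ |a - a'| + |b - b'| + |c - c'| := by
  have e : a * (b * c) - a' * (b' * c') =
    (a - a') * (b * c) + a' * c * (b - b') + a' * b' * (c - c') := by ring
  rw [e]
  refine (abs_add_three _ _ _).trans ?_
  simp only [abs_mul]
  have h1 : |b| * |c| ≤ 1 := mul_le_one₀ hb (abs_nonneg _) hc
  have h2 : |a'| * |c| ≤ 1 := mul_le_one₀ ha' (abs_nonneg _) hc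
  have h3 : |a'| * |b'| ≤ 1 := mul_le_one₀ ha' (abs_nonneg _) hb'
  have := mul_le_of_le_one_right (abs_nonneg (a - a')) h1
  have := mul_le_of_le_one_left (abs_nonneg (b - b')) h2
  have := mul_le_of_le_one_left (abs_nonneg (c - c')) h3
  linarith

lemma mf_lip [Fintype 𝒳] [Fintype 𝒰] {μ0 : 𝒳 → ℝ} (hμ0 : μ0 ∈ simplex 𝒳)
    {P : 𝒳 → 𝒰 → (𝒳 → ℝ) → 𝒳 → ℝ} (hP : IsKernel P) {LP LW L : ℝ} (hLP : 0 ≤ LP)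
    (hPL : KernelLipschitz P LP)
    {W : ℝ → ℝ → ℝ} (hW : IsGraphon W) (hWL : GraphonLipschitz W LW)
    {πe : ℝ → ℕ → 𝒳 → 𝒰 → ℝ} (hπe : ∀ α ∈ Set.Icc (0:ℝ) 1, IsPolicy (πe α))
    {D : Finset ℝ} (hD : ∀ (t : ℕ) (x : 𝒳) (u : 𝒰),
      ∀ α ∈ Set.Icc (0:ℝ) 1, ∀ β ∈ Set.Icc (0:ℝ) 1,
      (∀ d ∈ D, d ∉ Set.uIcc α β) → |πe α t x u - πe β t x u| ≤ L * |α - β|)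
    {μ : ℕ → ℝ → 𝒳 → ℝ} (hμ : IsMeanFieldOf W P μ0 πe μ) (t : ℕ) :
    ∃ K : ℝ, ∀ x, ∀ α ∈ Set.Icc (0:ℝ) 1, ∀ β ∈ Set.Icc (0:ℝ) 1,
      (∀ d ∈ D, d ∉ Set.uIcc α β) → |μ t α x - μ t β x| ≤ K * |α - β| := by
  induction t with
  | zero =>
    refine ⟨0, fun x α hα β hβ _ => ?_⟩
    rw [hμ.2.1 α hα, hμ.2.1 β hβ]; simp
  | succ t ih =>
    obtain ⟨K, hK⟩ := ih
    refine ⟨Fintype.card 𝒳 * (Fintype.card 𝒰 * (K + L + LP * (Fintype.card 𝒳 * LW))),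
      fun x' α hα β hβ hd => ?_⟩
    have hs := mf_simplex hμ0 hP hW hπe hμ t
    have hnb := fun a => nbhd_mem hW (hμ.1 t) hs a
    rw [hμ.2.2 t α hα, hμ.2.2 t β hβ, ← Finset.sum_sub_distrib]
    simp only [Finset.mul_sum, ← Finset.sum_sub_distrib]
    have hterm : ∀ x u, |μ t α x * (πe α t x u * P x u (nbhd W (μ t) α) x')
        - μ t β x * (πe β t x u * P x u (nbhd W (μ t) β) x')| ≤
        (K + L + LP * (Fintype.card 𝒳 * LW)) * |α - β| := by
      intro x u
      have h1 := hK x α hα β hβ hd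
      have h2 := hD t x u α hα β hβ hd
      have h3 : |P x u (nbhd W (μ t) α) x' - P x u (nbhd W (μ t) β) x'| ≤
          LP * (Fintype.card 𝒳 * (LW * |α - β|)) := by
        refine le_trans ?_ ((hPL x u _ _ (hnb α) (hnb β)).trans
          (mul_le_mul_of_nonneg_left (nbhd_lip hW hWL (hμ.1 t) hs hα hβ) hLP))
        exact Finset.single_le_sum
          (f := fun y => |P x u (nbhd W (μ t) α) y - P x u (nbhd W (μ t) β) y|)
          (fun y _ => abs_nonneg _) (Finset.mem_univ x')
      have h4 := triple_diff (a := μ t α x) (a' := μ t β x) (b := πe α t x u) (b' := πe β t x u)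
        (c := P x u (nbhd W (μ t) α) x') (c' := P x u (nbhd W (μ t) β) x')
        (simplex_abs_one (𝒳 := 𝒰) (hπe α hα t x) u) (simplex_abs_one (hP x u _ (hnb α)) x')
        (simplex_abs_one (hs β hβ) x) (simplex_abs_one (𝒳 := 𝒰) (hπe β hβ t x) u)
      refine h4.trans (le_trans (add_le_add (add_le_add h1 h2) h3) (le_of_eq (by ring)))
    calc _ ≤ ∑ x : 𝒳, ∑ u : 𝒰, (K + L + LP * (Fintype.card 𝒳 * LW)) * |α - β| :=
          (Finset.abs_sum_le_sum_abs _ _).trans (Finset.sum_le_sum fun x _ =>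
            (Finset.abs_sum_le_sum_abs _ _).trans (Finset.sum_le_sum fun u _ => hterm x u))
      _ = _ := by
          simp only [Finset.sum_const, Finset.card_univ, nsmul_eq_mul]; ring

/-! ### Cells -/

lemma integral_step {N : ℕ} (hN : 0 < N) (G : ℝ → ℝ) (v : Fin N → ℝ)
    (h : ∀ k : Fin N, ∀ β ∈ Set.Ioc (((k:ℕ):ℝ)/N) ((((k:ℕ):ℝ)+1)/N), G β = v k) :
    ∫ β in Set.Ioc (0:ℝ) 1, G β = (N:ℝ)⁻¹ * ∑ k, v k := by
  have hN' : (0:ℝ) < N := by exact_mod_cast hN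
  have hle : ∀ k : ℕ, (k:ℝ)/N ≤ ((k+1:ℕ):ℝ)/N := fun k => by
    push_cast; gcongr; linarith
  have hii : ∀ k < N, IntervalIntegrable G volume ((k:ℝ)/N) (((k+1:ℕ):ℝ)/N) := by
    intro k hk
    rw [intervalIntegrable_iff_integrableOn_Ioc_of_le (hle k)]
    refine IntegrableOn.congr_fun (f := fun _ => v ⟨k, hk⟩) (by simp) ?_ measurableSet_Ioc
    intro β hβ
    push_cast at hβ
    exact (h ⟨k, hk⟩ β hβ).symm
  have hs := intervalIntegral.sum_integral_adjacent_intervals (f := G) (μ := volume)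
    (a := fun k : ℕ => (k:ℝ)/N) (n := N) hii
  have e1 : ((0:ℕ):ℝ)/N = 0 := by simp
  have e2 : ((N:ℕ):ℝ)/N = 1 := div_self hN'.ne'
  simp only [e1, e2] at hs
  rw [← intervalIntegral.integral_of_le zero_le_one, ← hs, Finset.sum_range, Finset.mul_sum]
  refine Finset.sum_congr rfl fun k _ => ?_
  rw [intervalIntegral.integral_of_le (hle k)]
  rw [setIntegral_congr_fun (g := fun _ => v k) measurableSet_Ioc]
  · have : (((k:ℕ)+1:ℕ):ℝ)/N - ((k:ℕ):ℝ)/N = (N:ℝ)⁻¹ := by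
      push_cast; field_simp; ring
    rw [setIntegral_const, Real.volume_real_Ioc_of_le (hle k), this, smul_eq_mul]
  · intro β hβ
    push_cast at hβ
    exact h k β hβ

/-- upper grid point -/
noncomputable def cN (N : ℕ) (β : ℝ) : ℝ := (⌈(N:ℝ) * β⌉₊ : ℝ) / N

lemma cN_meas (N : ℕ) : Measurable (cN N) := by
  unfold cN
  have h : Measurable fun β : ℝ => ⌈(N:ℝ) * β⌉₊ :=
    Nat.measurable_ceil.comp (measurable_const.mul measurable_id)
  have h2 : Measurable fun n : ℕ => (n:ℝ) := measurable_from_top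
  exact (h2.comp h).div_const _

lemma cN_cell {N : ℕ} (hN : 0 < N) (k : Fin N) {β : ℝ}
    (hβ : β ∈ Set.Ioc (((k:ℕ):ℝ)/N) ((((k:ℕ):ℝ)+1)/N)) : cN N β = rep N k := by
  have hN' : (0:ℝ) < N := by exact_mod_cast hN
  have h1 := (div_lt_iff₀ hN').1 hβ.1
  have h2 := (le_div_iff₀ hN').1 hβ.2
  have : ⌈(N:ℝ) * β⌉₊ = (k:ℕ) + 1 := by
    rw [Nat.ceil_eq_iff (by omega)]
    push_cast
    constructor
    · linarith
    · linarith
  unfold cN rep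
  rw [this]; push_cast; rfl

lemma cN_ge {N : ℕ} (hN : 0 < N) (β : ℝ) : β ≤ cN N β := by
  have hN' : (0:ℝ) < N := by exact_mod_cast hN
  unfold cN
  rw [le_div_iff₀ hN', mul_comm]
  exact Nat.le_ceil _

lemma cN_lt {N : ℕ} (hN : 0 < N) {β : ℝ} (hβ : 0 ≤ β) : cN N β ≤ β + 1 / N := by
  have hN' : (0:ℝ) < N := by exact_mod_cast hN
  unfold cN
  rw [div_le_iff₀ hN', add_mul, div_mul_cancel₀ _ hN'.ne']
  have := Nat.ceil_lt_add_one (a := (N:ℝ) * β) (by positivity)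
  linarith

lemma cN_mem {N : ℕ} (hN : 0 < N) {β : ℝ} (hβ : β ∈ Set.Ioc (0:ℝ) 1) :
    cN N β ∈ Set.Icc (0:ℝ) 1 := by
  have hN' : (0:ℝ) < N := by exact_mod_cast hN
  refine ⟨hβ.1.le.trans (cN_ge hN β), ?_⟩
  unfold cN
  rw [div_le_one hN']
  have : ⌈(N:ℝ) * β⌉₊ ≤ N := Nat.ceil_le.2 (by nlinarith [hβ.2])
  exact_mod_cast this

lemma rep_mem {N : ℕ} (j : Fin N) : rep N j ∈ Set.Icc (0:ℝ) 1 := by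
  have hN : 0 < N := j.pos
  have hN' : (0:ℝ) < N := by exact_mod_cast hN
  have : ((j:ℕ):ℝ) + 1 ≤ N := by exact_mod_cast j.2
  unfold rep
  exact ⟨by positivity, (div_le_one hN').2 this⟩

lemma cell_iff {N : ℕ} (hN : 0 < N) {α : ℝ} {j : Fin N}
    (hα : α ∈ Set.Ioc (((j:ℕ):ℝ)/N) ((((j:ℕ):ℝ)+1)/N)) (i : Fin N) :
    (((i:ℕ):ℝ)/N < α ∧ α ≤ (((i:ℕ):ℝ)+1)/N) ↔ i = j := by
  have hN' : (0:ℝ) < N := by exact_mod_cast hN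
  constructor
  · rintro ⟨h1, h2⟩
    have a1 := (div_lt_div_iff_of_pos_right hN').1 (h1.trans_le hα.2)
    have a2 := (div_lt_div_iff_of_pos_right hN').1 (hα.1.trans_le h2)
    have b1 : (i:ℕ) < (j:ℕ) + 1 := by exact_mod_cast a1
    have b2 : (j:ℕ) < (i:ℕ) + 1 := by exact_mod_cast a2
    exact Fin.ext (by omega)
  · rintro rfl; exact hα

lemma step_cell {N : ℕ} (hN : 0 < N) (ξ : Fin N → Fin N → ℝ) {α β : ℝ} {j k : Fin N}
    (hα : α ∈ Set.Ioc (((j:ℕ):ℝ)/N) ((((j:ℕ):ℝ)+1)/N))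
    (hβ : β ∈ Set.Ioc (((k:ℕ):ℝ)/N) ((((k:ℕ):ℝ)+1)/N)) : stepGraphon ξ α β = ξ j k := by
  unfold stepGraphon
  simp only [cell_iff hN hα, cell_iff hN hβ]
  simp

lemma step_meas {N : ℕ} (ξ : Fin N → Fin N → ℝ) :
    Measurable (Function.uncurry (stepGraphon ξ)) := by
  unfold stepGraphon Function.uncurry
  refine Finset.measurable_sum _ fun i _ => Finset.measurable_sum _ fun j _ => ?_
  refine ((Measurable.ite ?_ measurable_const measurable_const).mul
    (Measurable.ite ?_ measurable_const measurable_const)).mul measurable_const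
  · exact (measurableSet_lt measurable_const measurable_fst).inter
      (measurableSet_le measurable_fst measurable_const)
  · exact (measurableSet_lt measurable_const measurable_snd).inter
      (measurableSet_le measurable_snd measurable_const)

lemma step_bdd {N : ℕ} {ξ : Fin N → Fin N → ℝ} (hξ : IsEdgeWeights ξ) (a b : ℝ) :
    |stepGraphon ξ a b| ≤ N * N := by
  unfold stepGraphon
  calc _ ≤ ∑ i : Fin N, ∑ j : Fin N, (1:ℝ) :=
        (Finset.abs_sum_le_sum_abs _ _).trans (Finset.sum_le_sum fun i _ =>
          (Finset.abs_sum_le_sum_abs _ _).trans (Finset.sum_le_sum fun j _ => by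
            rcases hξ.1 i j with h | h <;> rw [h] <;> split_ifs <;> norm_num))
    _ = _ := by simp

lemma det_ineq {N : ℕ} (hN : 0 < N) {ξ : Fin N → Fin N → ℝ} (hξ : IsEdgeWeights ξ)
    {W : ℝ → ℝ → ℝ} (hW : IsGraphon W) {LW : ℝ} (hLW : 0 ≤ LW) (hWL : GraphonLipschitz W LW)
    {g : ℝ → ℝ} (hg : Measurable g) (hg1 : ∀ β ∈ Set.Icc (0:ℝ) 1, |g β| ≤ 1) {e : ℝ}
    (hop : ∀ g : ℝ → ℝ, Measurable g → (∀ β, |g β| ≤ 1) →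
      (∫ α in Set.Ioc (0:ℝ) 1, |∫ β in Set.Ioc (0:ℝ) 1, (stepGraphon ξ α β - W α β) * g β|) ≤ e) :
    (N:ℝ)⁻¹ * ∑ j, |(N:ℝ)⁻¹ * ∑ k, ξ j k * g (rep N k)
        - ∫ β in Set.Ioc (0:ℝ) 1, W (rep N j) β * g β| ≤
      e + (LW / N + ∫ β in Set.Ioc (0:ℝ) 1, |g (cN N β) - g β|) := by
  have hN' : (0:ℝ) < N := by exact_mod_cast hN
  have cell_sub : ∀ k : Fin N, Set.Ioc (((k:ℕ):ℝ)/N) ((((k:ℕ):ℝ)+1)/N) ⊆ Set.Ioc (0:ℝ) 1 :=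
    fun k => Set.Ioc_subset_Ioc (by positivity) (rep_mem k).2
  set gN : ℝ → ℝ := (Set.Ioc (0:ℝ) 1).indicator (fun β => g (cN N β)) with hgN
  have hgNm : Measurable gN := (hg.comp (cN_meas N)).indicator measurableSet_Ioc
  have hgN_in : ∀ β ∈ Set.Ioc (0:ℝ) 1, gN β = g (cN N β) := fun β hβ =>
    Set.indicator_of_mem hβ _
  have hgN1 : ∀ β, |gN β| ≤ 1 := by
    intro β
    by_cases h : β ∈ Set.Ioc (0:ℝ) 1
    · rw [hgN_in β h]; exact hg1 _ (cN_mem hN h)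
    · rw [hgN, Set.indicator_of_notMem h]; simp
  have hg1' : ∀ β ∈ Set.Ioc (0:ℝ) 1, |g β| ≤ 1 := fun β hβ => hg1 β (Ioc_Icc hβ)
  have hstepm : ∀ a, Measurable (stepGraphon ξ a) := fun a =>
    (step_meas ξ).comp (measurable_const.prodMk measurable_id)
  have hA : ∀ a, IntegrableOn (fun β => stepGraphon ξ a β * gN β) (Set.Ioc (0:ℝ) 1) := fun a =>
    intOn_of_bdd ((hstepm a).mul hgNm) (c := N * N) fun β _ => by
      rw [abs_mul]
      exact (mul_le_of_le_one_right (abs_nonneg _) (hgN1 β)).trans (step_bdd hξ a β)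
  have hC : ∀ a, IntegrableOn (fun β => W a β * gN β) (Set.Ioc (0:ℝ) 1) := fun a =>
    Wg_int hW a hgNm fun β _ => hgN1 β
  have hB : ∀ a, IntegrableOn (fun β => W a β * g β) (Set.Ioc (0:ℝ) 1) := fun a =>
    Wg_int hW a hg hg1'
  have hdi : IntegrableOn (fun β => |g (cN N β) - g β|) (Set.Ioc (0:ℝ) 1) := by
    refine intOn_of_bdd (c := 2) ?_ fun β hβ => ?_
    · exact ((hg.comp (cN_meas N)).sub hg).abs
    · rw [abs_abs]
      have := abs_sub (g (cN N β)) (g β)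
      have := hg1 _ (cN_mem hN hβ)
      have := hg1' β hβ
      linarith
  set δ := ∫ β in Set.Ioc (0:ℝ) 1, |g (cN N β) - g β| with hδ
  have hAcell : ∀ j : Fin N, ∀ α ∈ Set.Ioc (((j:ℕ):ℝ)/N) ((((j:ℕ):ℝ)+1)/N),
      ∫ β in Set.Ioc (0:ℝ) 1, stepGraphon ξ α β * gN β = (N:ℝ)⁻¹ * ∑ k, ξ j k * g (rep N k) := by
    intro j α hα
    refine integral_step hN _ _ fun k β hβ => ?_
    rw [step_cell hN ξ hα hβ, hgN_in β (cell_sub k hβ), cN_cell hN k hβ]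
  rw [← integral_step hN (fun α => |(∫ β in Set.Ioc (0:ℝ) 1, stepGraphon ξ α β * gN β) -
    ∫ β in Set.Ioc (0:ℝ) 1, W (cN N α) β * g β|) _ (by
      intro j α hα
      rw [hAcell j α hα, cN_cell hN j hα])]
  have hCB : ∀ α ∈ Set.Ioc (0:ℝ) 1, |(∫ β in Set.Ioc (0:ℝ) 1, W α β * gN β) -
      ∫ β in Set.Ioc (0:ℝ) 1, W (cN N α) β * g β| ≤ LW / N + δ := by
    intro α hα
    rw [← integral_sub (hC α) (hB _)]
    have e1 : LW / N + δ = ∫ β in Set.Ioc (0:ℝ) 1, (LW / N + |g (cN N β) - g β|) := by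
      rw [integral_add (by simp) hdi]; simp [hδ]
    rw [e1]
    refine (abs_integral_le_integral_abs).trans ?_
    refine setIntegral_mono_on ((hC α).sub (hB _)).abs ((integrable_const _).add hdi)
      measurableSet_Ioc fun β hβ => ?_
    rw [hgN_in β hβ]
    have e2 : W α β * g (cN N β) - W (cN N α) β * g β =
      (W α β - W (cN N α) β) * g (cN N β) + W (cN N α) β * (g (cN N β) - g β) := by ring
    rw [e2]
    refine (abs_add_le _ _).trans (add_le_add ?_ ?_)
    · rw [abs_mul]
      refine (mul_le_of_le_one_right (abs_nonneg _) (hg1 _ (cN_mem hN hβ))).trans ?_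
      have h1 := hWL α β (cN N α) β (Ioc_Icc hα) (Ioc_Icc hβ) (cN_mem hN hα) (Ioc_Icc hβ)
      simp only [sub_self, abs_zero, add_zero] at h1
      refine h1.trans ?_
      rw [div_eq_mul_one_div]
      apply mul_le_mul_of_nonneg_left _ hLW
      rw [abs_le]
      have := cN_ge hN α
      have := cN_lt hN hα.1.le
      have : (0:ℝ) ≤ 1 / N := by positivity
      constructor <;> linarith
    · rw [abs_mul]
      exact mul_le_of_le_one_left (abs_nonneg _) (W_abs hW _ _)
  have hACi : IntegrableOn (fun α => |∫ β in Set.Ioc (0:ℝ) 1, (stepGraphon ξ α β - W α β) * gN β|)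
      (Set.Ioc (0:ℝ) 1) := by
    have hm : Measurable (Function.uncurry fun α β => (stepGraphon ξ α β - W α β) * gN β) :=
      ((step_meas ξ).sub hW.1).mul (hgNm.comp measurable_snd)
    have hm2 := hm.stronglyMeasurable.integral_prod_right
      (ν := volume.restrict (Set.Ioc (0:ℝ) 1))
    refine intOn_of_bdd (c := N * N + 1) hm2.measurable.abs fun α _ => ?_
    rw [abs_abs]
    have := norm_setIntegral_le_of_norm_le_const (μ := volume) (s := Set.Ioc (0:ℝ) 1)
      (f := fun β => (stepGraphon ξ α β - W α β) * gN β) (C := N * N + 1) (by simp) (by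
        intro β _
        rw [norm_mul, Real.norm_eq_abs, Real.norm_eq_abs]
        refine (mul_le_of_le_one_right (abs_nonneg _) (hgN1 β)).trans ?_
        exact (abs_sub _ _).trans (add_le_add (step_bdd hξ _ _) (W_abs hW _ _)))
    simpa using this
  calc _ ≤ ∫ α in Set.Ioc (0:ℝ) 1,
        (|∫ β in Set.Ioc (0:ℝ) 1, (stepGraphon ξ α β - W α β) * gN β| + (LW / N + δ)) := by
        refine integral_mono_of_nonneg (Eventually.of_forall fun α => abs_nonneg _)
          (hACi.add (integrable_const _)) ?_
        refine (ae_restrict_iff' measurableSet_Ioc).2 (Eventually.of_forall fun α hα => ?_)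
        have e3 : ∫ β in Set.Ioc (0:ℝ) 1, (stepGraphon ξ α β - W α β) * gN β =
          (∫ β in Set.Ioc (0:ℝ) 1, stepGraphon ξ α β * gN β) -
            ∫ β in Set.Ioc (0:ℝ) 1, W α β * gN β := by
          rw [← integral_sub (hA α) (hC α)]
          simp only [sub_mul]
        simp only [e3]
        exact (abs_sub_le _ (∫ β in Set.Ioc (0:ℝ) 1, W α β * gN β) _).trans
          (add_le_add le_rfl (hCB α hα))
    _ = (∫ α in Set.Ioc (0:ℝ) 1,
        |∫ β in Set.Ioc (0:ℝ) 1, (stepGraphon ξ α β - W α β) * gN β|) + (LW / N + δ) := by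
        rw [integral_add hACi (integrable_const _)]; simp
    _ ≤ _ := by
        have := hop gN hgNm hgN1
        linarith

lemma delta_tendsto {g : ℝ → ℝ} (hg : Measurable g) (hg1 : ∀ β ∈ Set.Icc (0:ℝ) 1, |g β| ≤ 1)
    {K : ℝ} {D : Finset ℝ} (hK : ∀ α ∈ Set.Icc (0:ℝ) 1, ∀ β ∈ Set.Icc (0:ℝ) 1,
      (∀ d ∈ D, d ∉ Set.uIcc α β) → |g α - g β| ≤ K * |α - β|) :
    Tendsto (fun N : ℕ => ∫ β in Set.Ioc (0:ℝ) 1, |g (cN (N+1) β) - g β|) atTop (nhds 0) := by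
  have key := tendsto_integral_of_dominated_convergence
    (μ := volume.restrict (Set.Ioc (0:ℝ) 1))
    (F := fun (N : ℕ) β => |g (cN (N+1) β) - g β|) (f := fun _ => 0) (fun _ => 2)
    (fun N => (((hg.comp (cN_meas (N+1))).sub hg).abs).aestronglyMeasurable)
    (by simp)
    (fun N => (ae_restrict_iff' measurableSet_Ioc).2 (Eventually.of_forall fun β hβ => by
      rw [Real.norm_eq_abs, abs_abs]
      have := abs_sub (g (cN (N+1) β)) (g β)
      have := hg1 _ (cN_mem N.succ_pos hβ)
      have := hg1 β (Ioc_Icc hβ)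
      linarith))
    ?_
  · simpa using key
  · have hDn : ∀ᵐ β ∂(volume.restrict (Set.Ioc (0:ℝ) 1)), β ∉ (D : Set ℝ) :=
      ae_restrict_of_ae (measure_eq_zero_iff_ae_notMem.1 (D.finite_toSet.measure_zero volume))
    filter_upwards [hDn, ae_restrict_mem measurableSet_Ioc] with β hβD hβ
    have hopen : (D : Set ℝ)ᶜ ∈ nhds β := D.finite_toSet.isClosed.isOpen_compl.mem_nhds hβD
    obtain ⟨ρ, hρ, hball⟩ := Metric.mem_nhds_iff.1 hopen
    have h1N : Tendsto (fun N : ℕ => 1 / ((N:ℝ) + 1)) atTop (nhds 0) :=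
      tendsto_one_div_add_atTop_nhds_zero_nat
    have hev : ∀ᶠ N : ℕ in atTop, 1 / ((N:ℝ) + 1) < ρ := h1N.eventually_lt_const hρ
    have hz : Tendsto (fun N : ℕ => |K| * (1 / ((N:ℝ) + 1))) atTop (nhds 0) := by
      simpa using h1N.const_mul |K|
    refine squeeze_zero' (Eventually.of_forall fun N => abs_nonneg _) ?_ hz
    filter_upwards [hev] with N hN
    have a1 := cN_ge N.succ_pos β
    have a2 := cN_lt N.succ_pos hβ.1.le
    push_cast at a2
    have a3 : |cN (N+1) β - β| ≤ 1 / ((N:ℝ) + 1) := by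
      rw [abs_of_nonneg (by linarith)]; linarith
    refine (hK _ (cN_mem N.succ_pos hβ) β (Ioc_Icc hβ) ?_).trans ?_
    · intro d hd hmem
      rw [Set.uIcc_of_ge a1] at hmem
      have : d ∈ Metric.ball β ρ := by
        rw [Metric.mem_ball, Real.dist_eq, abs_of_nonneg (by linarith [hmem.1])]
        linarith [hmem.2]
      exact hball this hd
    · exact mul_le_mul (le_abs_self K) a3 (abs_nonneg _) (abs_nonneg _)

lemma det_tendsto {ξ : (N : ℕ) → Fin N → Fin N → ℝ} (hξ : ∀ N, IsEdgeWeights (ξ N))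
    {W : ℝ → ℝ → ℝ} (hW : IsGraphon W) {LW : ℝ} (hLW : 0 ≤ LW) (hWL : GraphonLipschitz W LW)
    (hWconv : OpConvergesTo (fun N => stepGraphon (ξ N)) W)
    {g : ℝ → ℝ} (hg : Measurable g) (hg1 : ∀ β ∈ Set.Icc (0:ℝ) 1, |g β| ≤ 1)
    {K : ℝ} {D : Finset ℝ} (hK : ∀ α ∈ Set.Icc (0:ℝ) 1, ∀ β ∈ Set.Icc (0:ℝ) 1,
      (∀ d ∈ D, d ∉ Set.uIcc α β) → |g α - g β| ≤ K * |α - β|) :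
    Tendsto (fun N : ℕ => (N:ℝ)⁻¹ * ∑ j, |(N:ℝ)⁻¹ * ∑ k, ξ N j k * g (rep N k)
        - ∫ β in Set.Ioc (0:ℝ) 1, W (rep N j) β * g β|) atTop (nhds 0) := by
  rw [← tendsto_add_atTop_iff_nat 1]
  have h2 : Tendsto (fun N : ℕ => LW / ((N+1:ℕ):ℝ)
      + ∫ β in Set.Ioc (0:ℝ) 1, |g (cN (N+1) β) - g β|) atTop (nhds 0) := by
    have h1N : Tendsto (fun N : ℕ => LW * (1 / ((N:ℝ) + 1))) atTop (nhds 0) := by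
      simpa using (tendsto_one_div_add_atTop_nhds_zero_nat (𝕜 := ℝ)).const_mul LW
    have := h1N.add (delta_tendsto hg hg1 hK)
    simpa [div_eq_mul_inv] using this
  rw [Metric.tendsto_atTop]
  intro e he
  obtain ⟨N1, hN1⟩ := hWconv (e/2) (by positivity)
  obtain ⟨N2, hN2⟩ := Metric.tendsto_atTop.1 h2 (e/2) (by positivity)
  refine ⟨max N1 N2, fun N hN => ?_⟩
  have b1 := det_ineq N.succ_pos (hξ (N+1)) hW hLW hWL hg hg1
    (hN1 (N+1) (by have := le_of_max_le_left hN; omega))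
  have b2 := hN2 N (le_of_max_le_right hN)
  rw [Real.dist_eq, sub_zero] at b2 ⊢
  rw [abs_of_nonneg (by positivity)]
  have := le_abs_self (LW / ((N+1:ℕ):ℝ) + ∫ β in Set.Ioc (0:ℝ) 1, |g (cN (N+1) β) - g β|)
  linarith

lemma eta_tendsto (L C : ℝ) (b : ℕ → ℕ → ℝ)
    (hb : ∀ t, Tendsto (fun N => b N t) atTop (nhds 0)) (t : ℕ) :
    Tendsto (fun N => eta L C (b N) N t) atTop (nhds 0) := by
  have hs : Tendsto (fun N : ℕ => 4 / Real.sqrt N) atTop (nhds 0) :=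
    (Real.tendsto_sqrt_atTop.comp tendsto_natCast_atTop_atTop).const_div_atTop 4
  have h2 : Tendsto (fun N : ℕ => (2:ℝ) / N) atTop (nhds 0) :=
    tendsto_natCast_atTop_atTop.const_div_atTop 2
  induction t with
  | zero => simpa [eta] using hs
  | succ t ih =>
    simp only [eta]
    have := (hs.add ((((ih.const_mul C).add (hb t)).const_mul L).add h2)).add ih
    simpa using this

lemma reward_bdd [Fintype 𝒳] [Fintype 𝒰] {r : 𝒳 → 𝒰 → (𝒳 → ℝ) → ℝ} {Lr : ℝ} (hLr : 0 ≤ Lr)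
    (hrL : RewardLipschitz r Lr) :
    ∃ R : ℝ, 0 < R ∧ ∀ x u ν, ν ∈ subProb 𝒳 → |r x u ν| ≤ R := by
  have h0 : (fun _ => 0 : 𝒳 → ℝ) ∈ subProb 𝒳 := ⟨fun _ => le_rfl, by simp⟩
  refine ⟨∑ x, ∑ u, |r x u (fun _ => 0)| + Lr + 1, by positivity, fun x u ν hν => ?_⟩
  have h1 := hrL x u ν _ hν h0
  have h2 : l1dist ν (fun _ => 0) ≤ 1 := by
    unfold l1dist
    simp only [sub_zero]
    rw [Finset.sum_congr rfl fun x _ => abs_of_nonneg (hν.1 x)]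
    exact hν.2
  have h3 : |r x u (fun _ => 0)| ≤ ∑ x, ∑ u, |r x u (fun _ => 0)| :=
    (Finset.single_le_sum (f := fun u => |r x u (fun _ => 0)|) (fun _ _ => abs_nonneg _)
      (Finset.mem_univ u)).trans
    (Finset.single_le_sum (f := fun x => ∑ u, |r x u (fun _ => 0)|)
      (fun _ _ => Finset.sum_nonneg fun _ _ => abs_nonneg _) (Finset.mem_univ x))
  have h4 := abs_sub_abs_le_abs_sub (r x u ν) (r x u fun _ => 0)
  have h5 := mul_le_of_le_one_right hLr h2
  linarith

lemma l1dist_nonneg [Fintype 𝒳] (ν ν' : 𝒳 → ℝ) : 0 ≤ l1dist ν ν' :=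
  Finset.sum_nonneg fun _ _ => abs_nonneg _

/-- uniform convergence of the N-agent objectives to the mean field
objectives. Under Assumptions (W) and (Lip), for any ε, p > 0 there exists N' such that
for all N > N': |J^N_i(π¹,…,π^{i−1},π̂,π^{i+1},…,π^N) − J^𝛍_{i/N}(π̂)| < ε, uniformly
over all deviations π̂ ∈ Π and all i in a set 𝒲_N of at least ⌊(1−p)N⌋ agents,
where (π¹,…,π^N) = Γ_N(𝛑). -/
theorem objective_convergence
    {𝒳 𝒰 : Type*} [Fintype 𝒳] [DecidableEq 𝒳] [Nonempty 𝒳] [Fintype 𝒰] [Nonempty 𝒰]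
    (T : ℕ) (μ0 : 𝒳 → ℝ) (hμ0 : μ0 ∈ simplex 𝒳)
    (P : 𝒳 → 𝒰 → (𝒳 → ℝ) → 𝒳 → ℝ) (hP : IsKernel P)
    (r : 𝒳 → 𝒰 → (𝒳 → ℝ) → ℝ)
    (Lr LP LW : ℝ) (hrLip : RewardLipschitz r Lr) (hPLip : KernelLipschitz P LP)
    (W : ℝ → ℝ → ℝ) (hW : IsGraphon W) (hWLip : GraphonLipschitz W LW)
    (ξ : (N : ℕ) → Fin N → Fin N → ℝ) (hξ : ∀ N, IsEdgeWeights (ξ N))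
    (hWconv : OpConvergesTo (fun N => stepGraphon (ξ N)) W)
    (πe : ℝ → ℕ → 𝒳 → 𝒰 → ℝ)
    (hπe : ∀ α ∈ Set.Icc (0:ℝ) 1, IsPolicy (πe α))
    (hπemeas : ∀ t x u, Measurable fun α => πe α t x u)
    (hπeLip : EnsembleLipschitzUpTo πe)
    (μ : ℕ → ℝ → 𝒳 → ℝ) (hμ : IsMeanFieldOf W P μ0 πe μ)
    (ε p : ℝ) (hε : 0 < ε) (hp : 0 < p) :
    ∃ N' : ℕ, ∀ N > N', ∃ Wset : Finset (Fin N),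
      ⌊(1 - p) * (N : ℝ)⌋ ≤ (Wset.card : ℤ) ∧
      ∀ i ∈ Wset, ∀ πd : ℕ → 𝒳 → 𝒰 → ℝ, IsPolicy πd →
        |JN T r P μ0 (ξ N) (Function.update (gammaN πe N) i πd) i -
          Jmf T r P μ0 (fun s => nbhd W (μ s) ((((i : ℕ) : ℝ) + 1) / N)) πd| < ε := by
  classical
  obtain ⟨Lπ, D, hD⟩ := hπeLip
  -- nonnegative Lipschitz constants
  have hPL : KernelLipschitz P |LP| := fun x u ν ν' h h' =>
    (hPLip x u ν ν' h h').trans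
      (mul_le_mul_of_nonneg_right (le_abs_self _) (l1dist_nonneg _ _))
  have hrL : RewardLipschitz r |Lr| := fun x u ν ν' h h' =>
    (hrLip x u ν ν' h h').trans
      (mul_le_mul_of_nonneg_right (le_abs_self _) (l1dist_nonneg _ _))
  have hWL : GraphonLipschitz W |LW| := fun a b a' b' h1 h2 h3 h4 =>
    (hWLip a b a' b' h1 h2 h3 h4).trans
      (mul_le_mul_of_nonneg_right (le_abs_self _) (by positivity))
  obtain ⟨R, hR0, hR⟩ := reward_bdd (abs_nonneg Lr) hrL
  have hsim := fun t => mf_simplex hμ0 hP hW hπe hμ t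
  have hnb := fun t a => nbhd_mem hW (hμ.1 t) (hsim t) a
  let ms : (N : ℕ) → ℕ → Fin N → 𝒳 → ℝ := fun N t k => μ t (rep N k)
  let Gs : (N : ℕ) → ℕ → Fin N → 𝒳 → ℝ := fun N t j => nbhd W (μ t) (rep N j)
  let b : ℕ → ℕ → ℝ := fun N s => (N:ℝ)⁻¹ * ∑ j, Bd (ξ N) (ms N s) (Gs N s) j
  have hb : ∀ t, Tendsto (fun N => b N t) atTop (nhds 0) := by
    intro t
    obtain ⟨K, hK⟩ := mf_lip hμ0 hP (abs_nonneg LP) hPL hW hWL hπe hD hμ t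
    have h1 := fun x => det_tendsto hξ hW (abs_nonneg LW) hWL hWconv (hμ.1 t x)
      (fun β hβ => simplex_abs_one (hsim t β hβ) x) (hK x)
    have h2 := tendsto_finsetSum (Finset.univ : Finset 𝒳) fun x _ => h1 x
    simp only [Finset.sum_const_zero] at h2
    refine h2.congr fun N => ?_
    simp only [b, Bd, ms, Gs, nbhd]
    rw [← Finset.mul_sum, Finset.sum_comm]
  let η : ℕ → ℕ → ℝ := fun N t => eta |LP| (Fintype.card 𝒳) (b N) N t
  have hη : ∀ t, Tendsto (fun N => η N t) atTop (nhds 0) := eta_tendsto _ _ b hb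
  let S : (N : ℕ) → Fin N → ℝ := fun N i =>
    ∑ s ∈ Finset.range T, (Fintype.card 𝒳 * η N s + Bd (ξ N) (ms N s) (Gs N s) i)
  let A : ℕ → ℝ := fun N => ∑ s ∈ Finset.range T, (Fintype.card 𝒳 * η N s + b N s)
  have hA : Tendsto A atTop (nhds 0) := by
    have := tendsto_finsetSum (Finset.range T) fun s _ =>
      ((hη s).const_mul (Fintype.card 𝒳 : ℝ)).add (hb s)
    simpa using this
  set M : ℝ := |Lr| + T * (R * |LP|) + 1 with hM
  have hM0 : 0 < M := by positivity
  have hθ : 0 < p * (ε / M) := by positivity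
  obtain ⟨N0, hN0⟩ := eventually_atTop.1 (hA.eventually_lt_const hθ)
  refine ⟨N0, fun N hN => ?_⟩
  have hNpos : 0 < N := by omega
  have hN' : (0:ℝ) < N := by exact_mod_cast hNpos
  have hAN : A N < p * (ε / M) := hN0 N (by omega)
  have hπg : ∀ j, IsPolicy (gammaN πe N j) := fun j => hπe _ (rep_mem j)
  have hsumS : ∑ i, S N i = N * A N := by
    simp only [S, A, b]
    rw [Finset.sum_comm, Finset.mul_sum]
    refine Finset.sum_congr rfl fun s _ => ?_
    rw [Finset.sum_add_distrib]
    simp only [Finset.sum_const, Finset.card_univ, Fintype.card_fin, nsmul_eq_mul]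
    field_simp
  have hmain : ∀ i : Fin N, ∀ πd : ℕ → 𝒳 → 𝒰 → ℝ, IsPolicy πd → ∀ t,
      ∑ X, jointLaw P μ0 (ξ N) (Function.update (gammaN πe N) i πd) t X *
        l1dist (empNbhd (ξ N) X i) (Gs N t i) ≤
      Fintype.card 𝒳 * η N t + Bd (ξ N) (ms N t) (Gs N t) i ∧
      0 ≤ ∑ X, jointLaw P μ0 (ξ N) (Function.update (gammaN πe N) i πd) t X *
        l1dist (empNbhd (ξ N) X i) (Gs N t i) := by
    intro i πd hπd t
    have hπu : ∀ j, IsPolicy (Function.update (gammaN πe N) i πd j) := by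
      intro j
      by_cases h : j = i
      · subst h; simpa using hπd
      · simpa [h] using hπg j
    have hw := joint_mem hNpos hP hμ0 (hξ N) hπu t
    refine ⟨nbhd_bound (hξ N) (ms N t) (Gs N t) hw ?_ i,
      Finset.sum_nonneg fun X _ => mul_nonneg (hw.1 X) (l1dist_nonneg _ _)⟩
    exact conc hNpos hP (abs_nonneg LP) hPL hμ0 (hξ N) hπg i hπd (ms N) (Gs N)
      (fun t j => hnb t _) (fun j => hμ.2.1 _ (rep_mem j))
      (fun t j y => hμ.2.2 t _ (rep_mem j) y) t
  have hS0 : ∀ i, 0 ≤ S N i := fun i => Finset.sum_nonneg fun s _ =>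
    (hmain i _ (hπg i) s).2.trans (hmain i _ (hπg i) s).1
  refine ⟨Finset.univ.filter fun i => S N i < ε / M, ?_, ?_⟩
  · set good := Finset.univ.filter fun i => S N i < ε / M with hgood
    set bad := Finset.univ.filter fun i => ¬ S N i < ε / M with hbad
    have hc : good.card + bad.card = N := by
      have := Finset.card_filter_add_card_filter_not (s := (Finset.univ : Finset (Fin N)))
        (fun i => S N i < ε / M)
      simpa [hgood, hbad] using this
    have hbc : (bad.card : ℝ) * (ε / M) ≤ N * A N := by
      rw [← hsumS, ← nsmul_eq_mul]
      refine (Finset.card_nsmul_le_sum bad (S N) (ε / M) fun i hi => ?_).trans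
        (Finset.sum_le_sum_of_subset_of_nonneg (Finset.subset_univ _) fun i _ _ => hS0 i)
      exact not_lt.1 (Finset.mem_filter.1 hi).2
    have hbc2 : (bad.card : ℝ) ≤ p * N := by
      have h1 : (bad.card : ℝ) * (ε / M) ≤ (p * N) * (ε / M) := by nlinarith
      exact le_of_mul_le_mul_right h1 (by positivity)
    have hc' : (good.card : ℝ) + bad.card = N := by exact_mod_cast hc
    have : (1 - p) * (N:ℝ) ≤ (good.card : ℝ) := by linarith
    have h3 : ((⌊(1 - p) * (N : ℝ)⌋ : ℤ) : ℝ) ≤ ((good.card : ℤ) : ℝ) :=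
      (Int.floor_le _).trans (by simpa using this)
    exact_mod_cast h3
  · intro i hi πd hπd
    have hSi : S N i < ε / M := (Finset.mem_filter.1 hi).2
    have hπu : ∀ j, IsPolicy (Function.update (gammaN πe N) i πd j) := by
      intro j
      by_cases h : j = i
      · subst h; simpa using hπd
      · simpa [h] using hπg j
    have hfin := obj_bound hNpos T hP (abs_nonneg LP) hPL hμ0 (abs_nonneg Lr) hrL hR0 hR (hξ N)
      hπu i (fun s => Gs N s i) (fun s => hnb s _) _ (fun t => (hmain i πd hπd t).1)
    rw [Function.update_self] at hfin
    refine lt_of_le_of_lt hfin ?_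
    have h1 : (|Lr| + T * (R * |LP|)) * S N i ≤ M * S N i :=
      mul_le_mul_of_nonneg_right (by rw [hM]; linarith) (hS0 i)
    have h2 : M * S N i < ε := by
      have := mul_lt_mul_of_pos_left hSi hM0
      rwa [mul_div_cancel₀ _ hM0.ne'] at this
    exact lt_of_le_of_lt h1 h2

end GMFG
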